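/- arXiv:2506.03625 — 2 statements merged into one kernel-verified Lean document; each statement's English description precedes it below -/
import Mathlib

section
/- For every integer a ≥ 3 there exists a constant C_a such that for every integer b ≥ C_a with gcd(a,b) = 1, the number π*(a,b) of primes not representable as au + bv with u, v nonnegative integers satisfies π*(a,b) > (1/2 + 1/(2(a−1))) · S(a,b)/log S(a,b), where S(a,b) = ab − a − b. -/
/-- `piStar a b` is the number of primes not representable as `a*u + b*v`
with `u, v` nonnegative integers, i.e. the number of primes not in the
numerical semigroup `⟨a, b⟩`. -/
noncomputable def piStar (a b : ℕ) : ℕ :=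
  Set.ncard {p : ℕ | p.Prime ∧ ¬ ∃ u v : ℕ, p = a * u + b * v}

/-- `S a b = a*b - a - b` (the Frobenius-type quantity). -/
def S (a b : ℕ) : ℕ := a * b - a - b


namespace PNTAP
open Complex Filter Topology

noncomputable def E (q n : ℕ) (s : ℂ) : ℂ :=
  (s - 1) * (n : ℂ) ^ (-s) - ((n : ℂ) ^ (1 - s) - ((n + q : ℕ) : ℂ) ^ (1 - s)) / q

lemma hasDerivAt_shift (n : ℕ) (hn : 1 ≤ n) (w : ℂ) (v : ℝ) (hv : 0 ≤ v) :
    HasDerivAt (fun v : ℝ => ((n : ℂ) + (v : ℂ)) ^ w) (w * ((n : ℂ) + v) ^ (w - 1)) v := by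
  have h1 : HasDerivAt (fun v : ℝ => ((n : ℂ) + (v : ℂ))) 1 v := by
    simpa using (Complex.ofRealCLM.hasDerivAt (x := v)).const_add (n : ℂ)
  have hs : ((n : ℂ) + (v : ℂ)) ∈ slitPlane := by
    left
    have : (1 : ℝ) ≤ n := by exact_mod_cast hn
    simp; linarith
  have h2 := (hasDerivAt_id ((n : ℂ) + (v : ℂ))).cpow_const (c := w) hs
  simpa [Function.comp_def] using h2.comp v h1

lemma norm_shift_cpow (n : ℕ) (hn : 1 ≤ n) (w : ℂ) (v : ℝ) (hv : 0 ≤ v) :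
    ‖((n : ℂ) + v) ^ w‖ = ((n : ℝ) + v) ^ w.re := by
  have : (1 : ℝ) ≤ n := by exact_mod_cast hn
  have h : ((n : ℂ) + v) = (((n : ℝ) + v : ℝ) : ℂ) := by push_cast; rfl
  rw [h, Complex.norm_cpow_eq_rpow_re_of_pos (by linarith)]

lemma E_bound (q n : ℕ) (hq : 1 ≤ q) (hn : 1 ≤ n) (s : ℂ) (hs : 0 < s.re) :
    ‖E q n s‖ ≤ ‖s - 1‖ * ‖s‖ * q * (n : ℝ) ^ (-s.re - 1) := by
  have hn' : (1 : ℝ) ≤ n := by exact_mod_cast hn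
  have hq' : (1 : ℝ) ≤ q := by exact_mod_cast hq
  set B : ℝ := (n : ℝ) ^ (-s.re - 1) with hB
  have hB0 : 0 ≤ B := by positivity
  -- first difference
  have key1 : ∀ v ∈ Set.Icc (0 : ℝ) q, ‖((n : ℂ) + v) ^ (-s) - (n : ℂ) ^ (-s)‖ ≤ ‖s‖ * B * q := by
    intro v hv
    have := (convex_Icc (0 : ℝ) q).norm_image_sub_le_of_norm_hasDerivWithin_le
      (f := fun v : ℝ => ((n : ℂ) + (v : ℂ)) ^ (-s)) (f' := fun v => -s * ((n : ℂ) + v) ^ (-s - 1))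
      (C := ‖s‖ * B) (x := 0) (y := v)
      (fun x hx => (hasDerivAt_shift n hn (-s) x hx.1).hasDerivWithinAt)
      (fun x hx => by
        rw [norm_mul, norm_neg, norm_shift_cpow n hn _ x hx.1]
        refine mul_le_mul_of_nonneg_left ?_ (norm_nonneg _)
        have : (-s - 1).re = -s.re - 1 := by simp
        rw [this, hB]
        exact Real.rpow_le_rpow_of_nonpos (by linarith) (by linarith [hx.1]) (by linarith))
      ⟨le_rfl, by linarith⟩ hv
    simp only [ofReal_zero, add_zero, sub_zero] at this
    refine this.trans ?_
    refine mul_le_mul_of_nonneg_left ?_ (by positivity)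
    rw [Real.norm_of_nonneg hv.1]; exact hv.2
  have key2 := (convex_Icc (0 : ℝ) q).norm_image_sub_le_of_norm_hasDerivWithin_le
      (f := fun v : ℝ => (s - 1) * (n : ℂ) ^ (-s) * v + ((n : ℂ) + (v : ℂ)) ^ (1 - s))
      (f' := fun v => (s - 1) * (n : ℂ) ^ (-s) * 1 + (1 - s) * ((n : ℂ) + v) ^ (1 - s - 1))
      (C := ‖s - 1‖ * (‖s‖ * B * q)) (x := 0) (y := q)
      (fun x hx => by
        refine HasDerivAt.hasDerivWithinAt ?_
        exact ((Complex.ofRealCLM.hasDerivAt (x := x)).const_mul _).add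
          (hasDerivAt_shift n hn (1 - s) x hx.1))
      (fun x hx => by
        have e : (s - 1) * (n : ℂ) ^ (-s) * 1 + (1 - s) * ((n : ℂ) + x) ^ (1 - s - 1)
          = -((s - 1) * (((n : ℂ) + x) ^ (-s) - (n : ℂ) ^ (-s))) := by
          rw [show 1 - s - 1 = -s by ring]; ring
        rw [e, norm_neg, norm_mul]
        exact mul_le_mul_of_nonneg_left (key1 x hx) (norm_nonneg _))
      ⟨le_rfl, by linarith⟩ ⟨by linarith, le_rfl⟩
  have hqc : (q : ℂ) ≠ 0 := by exact_mod_cast (by omega : q ≠ 0)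
  have e2 : E q n s = ((s - 1) * (n : ℂ) ^ (-s) * ((q : ℝ) : ℂ) + ((n : ℂ) + ((q : ℝ) : ℂ)) ^ (1 - s)
     - ((s - 1) * (n : ℂ) ^ (-s) * ((0 : ℝ) : ℂ) + ((n : ℂ) + ((0 : ℝ) : ℂ)) ^ (1 - s))) / q := by
    unfold E
    push_cast
    field_simp
    ring_nf
  rw [e2, norm_div, Complex.norm_natCast, div_le_iff₀ (by linarith)]
  refine key2.trans (le_of_eq ?_)
  rw [sub_zero, Real.norm_of_nonneg (by linarith)]; ring

lemma E_differentiable (q n : ℕ) (hn : 1 ≤ n) : Differentiable ℂ (E q n) := by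
  unfold E
  have h1 : (n : ℂ) ≠ 0 := by exact_mod_cast (by omega : n ≠ 0)
  have h2 : ((n + q : ℕ) : ℂ) ≠ 0 := by exact_mod_cast (by omega : n + q ≠ 0)
  intro s
  refine DifferentiableAt.sub (DifferentiableAt.mul (by fun_prop) ?_)
    (DifferentiableAt.div_const (DifferentiableAt.sub ?_ ?_) _)
  · exact DifferentiableAt.const_cpow (by fun_prop) (Or.inl h1)
  · exact DifferentiableAt.const_cpow (by fun_prop) (Or.inl h1)
  · exact DifferentiableAt.const_cpow (by fun_prop) (Or.inl h2)

noncomputable def U (f : ℕ → ℂ) (q N : ℕ) (s : ℂ) : ℂ :=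
  (∑ i ∈ Finset.range q, f (N + i) * ((N + i : ℕ) : ℂ) ^ (1 - s)) / q

lemma U_sub (f : ℕ → ℂ) (q N : ℕ) (hf : ∀ n, f (n + q) = f n) (s : ℂ) :
    f N * E q N s = (s - 1) * (f N * (N : ℂ) ^ (-s)) - (U f q N s - U f q (N + 1) s) := by
  have h := Finset.sum_range_succ (fun i => f (N + i) * ((N + i : ℕ) : ℂ) ^ (1 - s)) q
  rw [Finset.sum_range_succ'] at h
  unfold U E
  have e : ∀ i, f (N + 1 + i) * ((N + 1 + i : ℕ) : ℂ) ^ (1 - s)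
     = f (N + (i + 1)) * ((N + (i + 1) : ℕ) : ℂ) ^ (1 - s) := by
    intro i; rw [show N + 1 + i = N + (i + 1) by ring]
  simp only [e]
  have h' : ∑ i ∈ Finset.range q, f (N + i) * ((N + i : ℕ) : ℂ) ^ (1 - s) -
      ∑ i ∈ Finset.range q, f (N + (i + 1)) * ((N + (i + 1) : ℕ) : ℂ) ^ (1 - s)
      = f N * ((N : ℂ) ^ (1 - s) - ((N + q : ℕ) : ℂ) ^ (1 - s)) := by
    rw [hf] at h
    simp only [add_zero] at h
    linear_combination -h
  rw [← sub_div, h']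
  ring

lemma U_differentiable (f : ℕ → ℂ) (q N : ℕ) (hN : 1 ≤ N) : Differentiable ℂ (U f q N) := by
  unfold U
  intro s
  refine DifferentiableAt.div_const (DifferentiableAt.fun_sum fun i _ => ?_) _
  refine DifferentiableAt.const_mul ?_ _
  have h2 : ((N + i : ℕ) : ℂ) ≠ 0 := by exact_mod_cast (by omega : N + i ≠ 0)
  exact DifferentiableAt.const_cpow (by fun_prop) (Or.inl h2)

lemma U_tendsto (f : ℕ → ℂ) (q : ℕ) (hb : ∀ n, ‖f n‖ ≤ 1) (s : ℂ) (hs : 1 < s.re) :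
    Tendsto (fun N => U f q N s) atTop (𝓝 0) := by
  unfold U
  rw [show (0 : ℂ) = (∑ i ∈ Finset.range q, (0 : ℂ)) / q by simp]
  refine Tendsto.div_const (tendsto_finsetSum _ fun i _ => ?_) _
  have h1 : Tendsto (fun N : ℕ => ((N + i : ℕ) : ℝ) ^ (-(s.re - 1))) atTop (𝓝 0) :=
    (tendsto_rpow_neg_atTop (by linarith)).comp
      (tendsto_natCast_atTop_atTop.comp (tendsto_add_atTop_nat i))
  refine squeeze_zero_norm' ?_ h1
  filter_upwards [eventually_ge_atTop 1] with N hN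
  rw [norm_mul, Complex.norm_natCast_cpow_of_pos (by omega)]
  have : (1 - s).re = -(s.re - 1) := by simp
  rw [this]
  have h0 : (0 : ℝ) ≤ ((N + i : ℕ) : ℝ) ^ (-(s.re - 1)) := by positivity
  nlinarith [hb (N + i)]

end PNTAP


namespace PNTAP
open Complex Filter Topology

lemma sum_head (η : ℝ) (h0 : 0 < η) (h1 : η ≤ 1) (M : ℕ) :
    ∑ i ∈ Finset.range M, ((i + 1 : ℕ) : ℝ) ^ (-(1 - η)) ≤ (M : ℝ) ^ η / η := by
  induction M with
  | zero => simp [Real.zero_rpow h0.ne']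
  | succ i ih =>
    rw [Finset.sum_range_succ]
    have hn : (0 : ℝ) < ((i + 1 : ℕ) : ℝ) := by positivity
    have hi : (i : ℝ) = ((i + 1 : ℕ) : ℝ) - 1 := by push_cast; ring
    set n : ℝ := ((i + 1 : ℕ) : ℝ) with hnn
    have hn1 : 1 ≤ n := by rw [hnn]; push_cast; linarith [(Nat.cast_nonneg i : (0 : ℝ) ≤ i)]
    have hb := rpow_one_add_le_one_add_mul_self (s := -(1 / n)) (by
      have : 1 / n ≤ 1 := by rw [div_le_one hn]; exact hn1
      linarith) h0.le h1
    have e1 : (i : ℝ) ^ η = n ^ η * (1 + -(1 / n)) ^ η := by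
      rw [← Real.mul_rpow hn.le (by
        have : 1 / n ≤ 1 := by rw [div_le_one hn]; exact hn1
        linarith), hi]
      congr 1; field_simp; ring
    have e2 : n ^ (-(1 - η)) = n ^ η * (1 / n) := by
      rw [show -(1 - η) = η - 1 by ring, Real.rpow_sub_one hn.ne']; ring
    rw [e2]
    have h3 : (i : ℝ) ^ η ≤ n ^ η * (1 + η * -(1 / n)) := by
      rw [e1]; exact mul_le_mul_of_nonneg_left hb (by positivity)
    rw [le_div_iff₀ h0] at ih ⊢
    nlinarith

lemma tail_step (β : ℝ) (h0 : 0 < β) (h1 : β ≤ 1) (n : ℝ) (hn : 2 ≤ n) :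
    n ^ (-(1 + β)) ≤ ((n - 1) ^ (-β) - n ^ (-β)) / β := by
  have hn0 : 0 < n := by linarith
  have hn1 : 1 / n ≤ 1 / 2 := one_div_le_one_div_of_le (by norm_num) hn
  have hn2 : 0 < 1 / n := by positivity
  have hb := rpow_one_add_le_one_add_mul_self (s := -(1 / n)) (by linarith) h0.le h1
  have e1 : (n - 1) ^ (-β) = n ^ (-β) * ((1 + -(1 / n)) ^ β)⁻¹ := by
    rw [← Real.rpow_neg (by linarith), ← Real.mul_rpow hn0.le (by linarith)]
    congr 1; field_simp; ring
  have e2 : n ^ (-(1 + β)) = n ^ (-β) * (1 / n) := by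
    rw [show -(1 + β) = -β - 1 by ring, Real.rpow_sub_one hn0.ne']; ring
  have hp : 0 < (1 + -(1 / n)) ^ β := Real.rpow_pos_of_pos (by linarith) _
  have h4 : 1 + β * (1 / n) ≤ ((1 + -(1 / n)) ^ β)⁻¹ := by
    rw [le_inv_comm₀ (by positivity) hp]
    refine hb.trans ?_
    rw [le_inv_comm₀ (by nlinarith) (by positivity)]
    rw [le_inv_comm₀ (by positivity) (by nlinarith)]
    rw [le_inv_comm₀ (by nlinarith) (by positivity), ← one_div, le_div_iff₀ (by nlinarith)]
    nlinarith [sq_nonneg (β * (1 / n))]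
  rw [e1, e2, le_div_iff₀ h0]
  have : 0 < n ^ (-β) := by positivity
  nlinarith

lemma tail_sum (β : ℝ) (h0 : 0 < β) (h1 : β ≤ 1) (M : ℕ) (hM : 1 ≤ M) (K : ℕ) :
    ∑ i ∈ Finset.range K, ((M + 1 + i : ℕ) : ℝ) ^ (-(1 + β)) ≤ (M : ℝ) ^ (-β) / β := by
  have : ∑ i ∈ Finset.range K, ((M + 1 + i : ℕ) : ℝ) ^ (-(1 + β))
      ≤ ((M : ℝ) ^ (-β) - ((M + K : ℕ) : ℝ) ^ (-β)) / β := by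
    induction K with
    | zero => simp
    | succ i ih =>
      rw [Finset.sum_range_succ]
      have hM' : (1 : ℝ) ≤ M := by exact_mod_cast hM
      have := tail_step β h0 h1 ((M + 1 + i : ℕ) : ℝ) (by push_cast; linarith [(Nat.cast_nonneg i : (0 : ℝ) ≤ i)])
      rw [show ((M + 1 + i : ℕ) : ℝ) - 1 = ((M + i : ℕ) : ℝ) by push_cast; ring] at this
      rw [show M + (i + 1) = M + 1 + i by ring]
      calc _ ≤ _ := add_le_add ih this
        _ = _ := by ring
  refine this.trans ?_
  gcongr
  have : 0 ≤ ((M + K : ℕ) : ℝ) ^ (-β) := by positivity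
  linarith

lemma tail_summable (β : ℝ) (h0 : 0 < β) (M : ℕ) :
    Summable fun i : ℕ => ((M + 1 + i : ℕ) : ℝ) ^ (-(1 + β)) := by
  have := (Real.summable_nat_rpow (p := -(1 + β))).2 (by linarith)
  have h := (summable_nat_add_iff (M + 1)).2 this
  refine h.congr fun i => ?_
  rw [add_comm]

/-- continuation formula -/
noncomputable def Rhs (f : ℕ → ℂ) (q M : ℕ) (s : ℂ) : ℂ :=
  (s - 1) * ∑ i ∈ Finset.range M, f (i + 1) * ((i + 1 : ℕ) : ℂ) ^ (-s)
    + ∑' i : ℕ, f (M + 1 + i) * E q (M + 1 + i) s + U f q (M + 1) s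

lemma fE_bound (f : ℕ → ℂ) (q M i : ℕ) (hq : 1 ≤ q) (hb : ∀ n, ‖f n‖ ≤ 1) (s : ℂ) (β : ℝ)
    (hβ : 0 < β) (hs : β ≤ s.re) :
    ‖f (M + 1 + i) * E q (M + 1 + i) s‖ ≤
      ‖s - 1‖ * ‖s‖ * q * ((M + 1 + i : ℕ) : ℝ) ^ (-(1 + β)) := by
  rw [norm_mul]
  have h1 := E_bound q (M + 1 + i) hq (by omega) s (by linarith)
  have h2 : ((M + 1 + i : ℕ) : ℝ) ^ (-s.re - 1) ≤ ((M + 1 + i : ℕ) : ℝ) ^ (-(1 + β)) := by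
    apply Real.rpow_le_rpow_of_exponent_le
    · exact_mod_cast (by omega : 1 ≤ M + 1 + i)
    · linarith
  calc _ ≤ 1 * ‖E q (M + 1 + i) s‖ := by gcongr; exact hb _
    _ ≤ _ := by rw [one_mul]; exact h1.trans (by gcongr)

lemma Rhs_eq (f : ℕ → ℂ) (q M : ℕ) (hq : 1 ≤ q) (hf : ∀ n, f (n + q) = f n)
    (hb : ∀ n, ‖f n‖ ≤ 1) (s : ℂ) (hs : 1 < s.re) :
    Rhs f q M s = (s - 1) * LSeries f s := by
  have hs0 : s ≠ 0 := by rintro rfl; simp at hs; linarith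
  have hsum : LSeriesSummable f s :=
    LSeriesSummable_of_bounded_of_one_lt_re (m := 1) (fun n _ => hb n) hs
  have hterm : ∀ n, LSeries.term f s (n + 1) = f (n + 1) * ((n + 1 : ℕ) : ℂ) ^ (-s) := by
    intro n
    rw [LSeries.term_of_ne_zero (by omega), cpow_neg]; rfl
  have hL : LSeries f s = ∑ i ∈ Finset.range M, f (i + 1) * ((i + 1 : ℕ) : ℂ) ^ (-s)
      + ∑' i, f (M + 1 + i) * ((M + 1 + i : ℕ) : ℂ) ^ (-s) := by
    unfold LSeries
    rw [← hsum.sum_add_tsum_nat_add (M + 1), Finset.sum_range_succ']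
    simp only [LSeries.term_zero, add_zero, hterm]
    congr 1
    refine tsum_congr fun i => ?_
    rw [show i + (M + 1) = M + i + 1 by ring, hterm, show M + i + 1 = M + 1 + i by ring]
  have hs1 : Summable fun i => f (M + 1 + i) * ((M + 1 + i : ℕ) : ℂ) ^ (-s) := by
    refine ((summable_nat_add_iff (M + 1)).2 hsum).congr fun i => ?_
    rw [show i + (M + 1) = M + i + 1 by ring, hterm, show M + i + 1 = M + 1 + i by ring]
  have hs2 : Summable fun i => f (M + 1 + i) * E q (M + 1 + i) s :=
    Summable.of_norm_bounded ((tail_summable 1 one_pos M).mul_left _)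
      (fun i => fE_bound f q M i hq hb s 1 one_pos hs.le)
  have hpart : ∀ K, ∑ i ∈ Finset.range K, f (M + 1 + i) * E q (M + 1 + i) s
      = (s - 1) * ∑ i ∈ Finset.range K, f (M + 1 + i) * ((M + 1 + i : ℕ) : ℂ) ^ (-s)
        - (U f q (M + 1) s - U f q (M + 1 + K) s) := by
    intro K
    induction K with
    | zero => simp
    | succ K ih =>
      rw [Finset.sum_range_succ, Finset.sum_range_succ, ih, U_sub f q (M + 1 + K) hf s]
      rw [show M + 1 + (K + 1) = M + 1 + K + 1 by ring]
      ring
  have ht1 := hs2.hasSum.tendsto_sum_nat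
  have ht2 : Tendsto (fun K => (s - 1) * ∑ i ∈ Finset.range K, f (M + 1 + i) * ((M + 1 + i : ℕ) : ℂ) ^ (-s)
        - (U f q (M + 1) s - U f q (M + 1 + K) s)) atTop
      (𝓝 ((s - 1) * ∑' i, f (M + 1 + i) * ((M + 1 + i : ℕ) : ℂ) ^ (-s) - (U f q (M + 1) s - 0))) := by
    refine (hs1.hasSum.tendsto_sum_nat.const_mul _).sub (tendsto_const_nhds.sub ?_)
    have := (U_tendsto f q hb s hs).comp (tendsto_add_atTop_nat (M + 1))
    refine this.congr fun K => ?_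
    simp only [Function.comp]
    rw [add_comm]
  have := tendsto_nhds_unique (ht1.congr hpart) ht2
  unfold Rhs
  rw [this, hL]
  ring

lemma Rhs_diff (f : ℕ → ℂ) (q M : ℕ) (hq : 1 ≤ q) (hb : ∀ n, ‖f n‖ ≤ 1) (s₀ : ℂ)
    (hs : 0 < s₀.re) : DifferentiableAt ℂ (Rhs f q M) s₀ := by
  unfold Rhs
  refine DifferentiableAt.add (DifferentiableAt.add ?_ ?_) (U_differentiable f q _ (by omega) s₀)
  · refine DifferentiableAt.mul (by fun_prop) (DifferentiableAt.fun_sum fun i _ => ?_)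
    refine DifferentiableAt.const_mul ?_ _
    have h2 : ((i + 1 : ℕ) : ℂ) ≠ 0 := by exact_mod_cast (by omega : i + 1 ≠ 0)
    exact DifferentiableAt.const_cpow (by fun_prop) (Or.inl h2)
  · set W : Set ℂ := {s | s₀.re / 2 < s.re} ∩ Metric.ball 0 (‖s₀‖ + 1)
    have hWo : IsOpen W := (isOpen_lt continuous_const continuous_re).inter Metric.isOpen_ball
    have hsW : s₀ ∈ W := ⟨by show s₀.re / 2 < s₀.re; linarith, by simp⟩
    have hd : DifferentiableOn ℂ (fun s => ∑' i : ℕ, f (M + 1 + i) * E q (M + 1 + i) s) W := by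
      refine differentiableOn_tsum_of_summable_norm
        (u := fun i => (‖s₀‖ + 2) * (‖s₀‖ + 1) * q * ((M + 1 + i : ℕ) : ℝ) ^ (-(1 + s₀.re / 2)))
        ((tail_summable _ (by linarith) M).mul_left _) ?_ hWo ?_
      · intro i
        exact ((E_differentiable q (M + 1 + i) (by omega)).const_mul _).differentiableOn
      · intro i w hw
        refine (fE_bound f q M i hq hb w (s₀.re / 2) (by linarith) hw.1.le).trans ?_
        have h1 : ‖w‖ ≤ ‖s₀‖ + 1 := (mem_ball_zero_iff.1 hw.2).le
        have h2 : ‖w - 1‖ ≤ ‖s₀‖ + 2 := (norm_sub_le _ _).trans (by simp; linarith)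
        gcongr
    exact hd.differentiableAt (hWo.mem_nhds hsW)

lemma P_eq (f : ℕ → ℂ) (q M : ℕ) (hq : 1 ≤ q) (hf : ∀ n, f (n + q) = f n)
    (hb : ∀ n, ‖f n‖ ≤ 1) (P : ℂ → ℂ) (hP : Differentiable ℂ P)
    (hPL : ∀ s : ℂ, 1 < s.re → P s = (s - 1) * LSeries f s) (s : ℂ) (hs : 0 < s.re) :
    P s = Rhs f q M s := by
  have hWo : IsOpen {s : ℂ | 0 < s.re} := isOpen_lt continuous_const continuous_re
  have h1 : AnalyticOnNhd ℂ P {s : ℂ | 0 < s.re} := hP.differentiableOn.analyticOnNhd hWo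
  have h2 : AnalyticOnNhd ℂ (Rhs f q M) {s : ℂ | 0 < s.re} :=
    DifferentiableOn.analyticOnNhd
      (fun s hs => (Rhs_diff f q M hq hb s hs).differentiableWithinAt) hWo
  refine h1.eqOn_of_preconnected_of_eventuallyEq h2 (convex_halfSpace_re_gt 0).isPreconnected
    (z₀ := 2) (by simp) ?_ hs
  have hVo : IsOpen {s : ℂ | 1 < s.re} := isOpen_lt continuous_const continuous_re
  filter_upwards [hVo.mem_nhds (show (2 : ℂ) ∈ {s : ℂ | 1 < s.re} by simp)] with w hw
  rw [hPL w hw, Rhs_eq f q M hq hf hb w hw]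

lemma P_bound (f : ℕ → ℂ) (q : ℕ) (hq : 1 ≤ q) (hf : ∀ n, f (n + q) = f n)
    (hb : ∀ n, ‖f n‖ ≤ 1) (P : ℂ → ℂ) (hP : Differentiable ℂ P)
    (hPL : ∀ s : ℂ, 1 < s.re → P s = (s - 1) * LSeries f s) (η : ℝ) (h0 : 0 < η) (h1 : η < 1) :
    ∃ C : ℝ, 0 < C ∧ ∀ s : ℂ, 1 - η ≤ s.re → s.re ≤ 4 → 1 ≤ |s.im| →
      ‖P s‖ ≤ ‖s - 1‖ * (C * |s.im| ^ η) := by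
  refine ⟨1 / η + 10 * q / (1 - η) + (2 + q), by
    have : 0 < 1 - η := by linarith
    positivity, fun s hs1 hs2 ht => ?_⟩
  set t := |s.im| with htt
  set M := ⌊t⌋₊ with hM
  have hM1 : 1 ≤ M := Nat.le_floor (by simpa using ht)
  have hM1' : (1 : ℝ) ≤ M := by exact_mod_cast hM1
  have hMt : (M : ℝ) ≤ t := Nat.floor_le (by linarith)
  have htM : t ≤ 2 * M := by linarith [Nat.lt_floor_add_one t]
  have hq' : (1 : ℝ) ≤ q := by exact_mod_cast hq
  have ht1 : t ≤ ‖s - 1‖ := by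
    have := Complex.abs_im_le_norm (s - 1); simpa using this
  have hη : 0 < 1 - η := by linarith
  have htη : 1 ≤ t ^ η := Real.one_le_rpow ht h0.le
  rw [P_eq f q M hq hf hb P hP hPL s (by linarith)]
  have b1 : ‖∑ i ∈ Finset.range M, f (i + 1) * ((i + 1 : ℕ) : ℂ) ^ (-s)‖ ≤ t ^ η / η := by
    refine (norm_sum_le _ _).trans ?_
    refine le_trans (Finset.sum_le_sum fun i _ => ?_) ((sum_head η h0 h1.le M).trans (by gcongr))
    rw [norm_mul, Complex.norm_natCast_cpow_of_pos (by omega)]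
    refine (mul_le_of_le_one_left (by positivity) (hb _)).trans ?_
    apply Real.rpow_le_rpow_of_exponent_le
    · exact_mod_cast (by omega : 1 ≤ i + 1)
    · simp; linarith
  have b2 : ‖∑' i : ℕ, f (M + 1 + i) * E q (M + 1 + i) s‖ ≤
      ‖s - 1‖ * ‖s‖ * q * ((M : ℝ) ^ (-(1 - η)) / (1 - η)) := by
    have hsm := (tail_summable (1 - η) hη M)
    refine (tsum_of_norm_bounded (hsm.mul_left (‖s - 1‖ * ‖s‖ * q)).hasSum
      (fun i => fE_bound f q M i hq hb s (1 - η) hη hs1)).trans ?_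
    rw [tsum_mul_left]
    refine mul_le_mul_of_nonneg_left ?_ (by positivity)
    exact hsm.tsum_le_of_sum_range_le (tail_sum (1 - η) hη (by linarith) M hM1)
  have b2' : ‖s‖ * q * ((M : ℝ) ^ (-(1 - η)) / (1 - η)) ≤ 10 * q / (1 - η) * t ^ η := by
    have c1 : ‖s‖ ≤ 5 * t := by
      refine (Complex.norm_le_abs_re_add_abs_im s).trans ?_
      have : |s.re| ≤ 4 := abs_le.2 ⟨by linarith, hs2⟩
      linarith
    have c2 : (M : ℝ) ^ (-(1 - η)) ≤ 2 * t ^ (-(1 - η)) := by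
      have : (M : ℝ) ^ (-(1 - η)) ≤ (t / 2) ^ (-(1 - η)) :=
        Real.rpow_le_rpow_of_nonpos (by linarith) (by linarith) (by linarith)
      refine this.trans ?_
      rw [div_eq_mul_inv, Real.mul_rpow (by linarith) (by norm_num), mul_comm]
      refine mul_le_mul_of_nonneg_right ?_ (by positivity)
      rw [Real.inv_rpow (by norm_num), ← Real.rpow_neg (by norm_num), neg_neg]
      calc (2 : ℝ) ^ (1 - η) ≤ 2 ^ (1 : ℝ) := Real.rpow_le_rpow_of_exponent_le (by norm_num) (by linarith)
        _ = 2 := by simp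
    have c3 : t * t ^ (-(1 - η)) = t ^ η := by
      rw [show -(1 - η) = η - 1 by ring, Real.rpow_sub_one (by linarith)]
      field_simp
    calc _ ≤ (5 * t) * q * ((2 * t ^ (-(1 - η))) / (1 - η)) := by gcongr
      _ = 10 * q / (1 - η) * (t * t ^ (-(1 - η))) := by ring
      _ = _ := by rw [c3]
  have b3 : ‖U f q (M + 1) s‖ ≤ (2 + q) * t ^ η := by
    unfold U
    rw [norm_div, Complex.norm_natCast, div_le_iff₀ (by linarith)]
    refine (norm_sum_le _ _).trans ?_
    have : ∀ i ∈ Finset.range q, ‖f (M + 1 + i) * ((M + 1 + i : ℕ) : ℂ) ^ (1 - s)‖ ≤ (2 + q) * t ^ η := by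
      intro i hi
      rw [Finset.mem_range] at hi
      have hi' : (i : ℝ) ≤ q := by exact_mod_cast hi.le
      rw [norm_mul, Complex.norm_natCast_cpow_of_pos (by omega)]
      refine (mul_le_of_le_one_left (by positivity) (hb _)).trans ?_
      calc ((M + 1 + i : ℕ) : ℝ) ^ (1 - s).re ≤ ((M + 1 + i : ℕ) : ℝ) ^ η := by
            apply Real.rpow_le_rpow_of_exponent_le
            · exact_mod_cast (by omega : 1 ≤ M + 1 + i)
            · simp; linarith
        _ ≤ ((2 + q) * t) ^ η := by
            apply Real.rpow_le_rpow (by positivity) _ h0.le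
            push_cast
            nlinarith
        _ = (2 + q) ^ η * t ^ η := by rw [Real.mul_rpow (by linarith) (by linarith)]
        _ ≤ (2 + q) * t ^ η := by
            gcongr
            calc (2 + q : ℝ) ^ η ≤ (2 + q) ^ (1 : ℝ) := Real.rpow_le_rpow_of_exponent_le (by linarith) h1.le
              _ = _ := by simp
    refine (Finset.sum_le_sum this).trans ?_
    simp; linarith
  unfold Rhs
  calc _ ≤ ‖s - 1‖ * (t ^ η / η) + ‖s - 1‖ * ‖s‖ * q * ((M : ℝ) ^ (-(1 - η)) / (1 - η)) + (2 + q) * t ^ η := by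
        refine (norm_add₃_le).trans ?_
        rw [norm_mul]
        gcongr
    _ ≤ ‖s - 1‖ * (t ^ η / η) + ‖s - 1‖ * (10 * q / (1 - η) * t ^ η) + ‖s - 1‖ * ((2 + q) * t ^ η) := by
        refine add_le_add (add_le_add le_rfl ?_) ?_
        · calc _ = ‖s - 1‖ * (‖s‖ * q * ((M : ℝ) ^ (-(1 - η)) / (1 - η))) := by ring
            _ ≤ _ := mul_le_mul_of_nonneg_left b2' (norm_nonneg _)
        · have : 0 ≤ (2 + q : ℝ) * t ^ η := by positivity
          exact le_mul_of_one_le_left this (ht.trans ht1)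
    _ = _ := by ring

end PNTAP


namespace PNTAP
open Complex Filter Topology DirichletCharacter

section
variable {q : ℕ} [NeZero q] (χ : DirichletCharacter ℂ q)

lemma L_bound (η : ℝ) (h0 : 0 < η) (h1 : η < 1) :
    ∃ C : ℝ, 0 < C ∧ ∀ s : ℂ, 1 - η ≤ s.re → s.re ≤ 4 → 1 ≤ |s.im| →
      ‖LFunction χ s‖ ≤ C * |s.im| ^ η := by
  have hP : ∃ P : ℂ → ℂ, Differentiable ℂ P ∧ ∀ s : ℂ, s ≠ 1 → P s = (s - 1) * LFunction χ s := by
    by_cases h : χ = 1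
    · subst h
      refine ⟨LFunctionTrivChar₁ q, differentiable_LFunctionTrivChar₁ q, fun s hs => ?_⟩
      rw [LFunctionTrivChar₁, Function.update_of_ne hs]
    · exact ⟨fun s => (s - 1) * LFunction χ s,
        (by fun_prop : Differentiable ℂ fun s : ℂ => s - 1).mul (differentiable_LFunction h),
        fun s _ => rfl⟩
  obtain ⟨P, hPd, hP⟩ := hP
  obtain ⟨C, hC, h⟩ := P_bound (fun n => χ n) q (NeZero.one_le) (fun n => by simp)
    (fun n => χ.norm_le_one _) P hPd (fun s hs => by
      rw [hP s (by rintro rfl; simp at hs), LFunction_eq_LSeries χ hs]) η h0 h1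
  refine ⟨C, hC, fun s a b c => ?_⟩
  have hs : s ≠ 1 := by rintro rfl; simp at c; linarith
  have := h s a b c
  rw [hP s hs, norm_mul] at this
  exact le_of_mul_le_mul_left this (norm_pos_iff.2 (sub_ne_zero.2 hs))

lemma im_near {s z : ℂ} {R : ℝ} (h : ‖z - s‖ ≤ R) (hR : R ≤ 1) (hs : 2 ≤ |s.im|) :
    |s.im| ≤ 2 * |z.im| ∧ |z.im| ≤ 2 * |s.im| ∧ 1 ≤ |z.im| ∧ |z.re - s.re| ≤ R := by
  have h1 := (Complex.abs_im_le_norm (z - s)).trans h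
  have h2 := (Complex.abs_re_le_norm (z - s)).trans h
  simp only [sub_im, sub_re] at h1 h2
  have h3 := abs_sub_abs_le_abs_sub z.im s.im
  have h4 := abs_sub_abs_le_abs_sub s.im z.im
  rw [abs_sub_comm] at h4
  refine ⟨by linarith, by linarith, by linarith, h2⟩

lemma two_mul_rpow {t η : ℝ} (ht : 0 ≤ t) (_h0 : 0 < η) (h1 : η < 1) :
    (2 * t) ^ η ≤ 2 * t ^ η := by
  rw [Real.mul_rpow (by norm_num) ht]
  gcongr
  calc (2 : ℝ) ^ η ≤ 2 ^ (1 : ℝ) := Real.rpow_le_rpow_of_exponent_le (by norm_num) h1.le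
    _ = _ := by simp

lemma L_diffAt {s : ℂ} (hs : s ≠ 1) : DifferentiableAt ℂ (LFunction χ) s :=
  differentiableAt_LFunction χ s (Or.inl hs)

lemma ne_one_of_im {s : ℂ} (hs : 1 ≤ |s.im|) : s ≠ 1 := by
  rintro rfl; simp at hs; linarith

lemma Lderiv_bound (η : ℝ) (h0 : 0 < η) (h1 : η < 1) :
    ∃ C : ℝ, 0 < C ∧ ∀ s : ℂ, 1 - η / 2 ≤ s.re → s.re ≤ 3 → 2 ≤ |s.im| →
      ‖deriv (LFunction χ) s‖ ≤ C * |s.im| ^ η := by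
  obtain ⟨C, hC, h⟩ := L_bound χ η h0 h1
  refine ⟨C * 2 / (η / 2), by positivity, fun s a b c => ?_⟩
  have key := Complex.norm_deriv_le_of_forall_mem_sphere_norm_le (f := LFunction χ) (c := s)
    (R := η / 2) (C := C * (2 * |s.im| ^ η)) (by linarith) ?_ ?_
  · refine key.trans (le_of_eq (by ring))
  · refine DifferentiableOn.diffContOnCl fun z hz => ?_
    rw [closure_ball _ (by linarith : η / 2 ≠ 0), mem_closedBall_iff_norm] at hz
    exact (L_diffAt χ (ne_one_of_im (im_near hz (by linarith) c).2.2.1)).differentiableWithinAt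
  · intro z hz
    rw [mem_sphere_iff_norm] at hz
    obtain ⟨-, i2, i3, i4⟩ := im_near hz.le (by linarith) c
    rw [abs_le] at i4
    refine (h z (by linarith) (by linarith) i3).trans ?_
    gcongr
    exact (Real.rpow_le_rpow (abs_nonneg _) i2 h0.le).trans (two_mul_rpow (abs_nonneg _) h0 h1)

lemma Ltriv_bound (q : ℕ) [NeZero q] : ∃ C : ℝ, 0 < C ∧ ∀ x : ℝ, 0 < x → x ≤ 1 →
    ‖LFunctionTrivChar q (1 + x)‖ ≤ C / x := by
  have hc : ContinuousOn (fun x : ℝ => LFunctionTrivChar₁ q (1 + x)) (Set.Icc 0 1) :=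
    ((differentiable_LFunctionTrivChar₁ q).continuous.comp (by fun_prop)).continuousOn
  obtain ⟨C, hC⟩ := isCompact_Icc.exists_bound_of_continuousOn hc
  refine ⟨max C 1, by positivity, fun x hx hx1 => ?_⟩
  have := hC x ⟨hx.le, hx1⟩
  have hne : (1 + x : ℂ) ≠ 1 := by
    simp; exact hx.ne'
  simp only [LFunctionTrivChar₁] at this
  rw [Function.update_of_ne hne, norm_mul] at this
  rw [le_div_iff₀ hx]
  have e : ‖(1 + x : ℂ) - 1‖ = x := by simp [abs_of_pos hx]
  rw [e] at this
  rw [mul_comm]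
  exact this.trans (le_max_left _ _)

lemma L_lower (η : ℝ) (h0 : 0 < η) (h1 : η < 1) :
    ∃ κ c : ℝ, 0 < κ ∧ κ ≤ η / 2 ∧ 0 < c ∧ ∀ s : ℂ, 2 ≤ |s.im| → 1 - κ / (|s.im| ^ η) ^ 5 ≤ s.re →
      s.re ≤ 2 → c / (|s.im| ^ η) ^ 4 ≤ ‖LFunction χ s‖ := by
  obtain ⟨C₁, hC₁, H1⟩ := Ltriv_bound q
  obtain ⟨C₂, hC₂, H2⟩ := L_bound (χ ^ 2) η h0 h1
  obtain ⟨C₃, hC₃, H3⟩ := Lderiv_bound χ η h0 h1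
  set D : ℝ := 2 * C₁ ^ 3 * C₂ with hD
  have hD0 : 0 < D := by positivity
  set κ : ℝ := min (η / 2) (1 / (256 * C₃ ^ 4 * D)) with hκ
  have hκ0 : 0 < κ := lt_min (by linarith) (by positivity)
  have hκ1 : κ ≤ η / 2 := min_le_left _ _
  have hκ2 : 256 * C₃ ^ 4 * D * κ ≤ 1 := by
    have : κ ≤ 1 / (256 * C₃ ^ 4 * D) := min_le_right _ _
    rw [le_div_iff₀ (by positivity)] at this
    linarith
  set m : ℝ := (κ ^ 3 / D) ^ (1 / 4 : ℝ) with hm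
  have hm0 : 0 < m := by positivity
  have hm4 : m ^ 4 = κ ^ 3 / D := by
    rw [hm, ← Real.rpow_natCast, ← Real.rpow_mul (by positivity)]; norm_num
  have hm2 : 4 * κ * C₃ ≤ m := by
    refine le_of_pow_le_pow_left₀ (n := 4) (by norm_num) hm0.le ?_
    rw [hm4, le_div_iff₀ hD0]
    have : (4 * κ * C₃) ^ 4 * D = κ ^ 3 * (256 * C₃ ^ 4 * D * κ) := by ring
    rw [this]
    exact mul_le_of_le_one_right (by positivity) hκ2
  -- lower bound to the right
  have right : ∀ (y x : ℝ), 2 ≤ |y| → 0 < x → x ≤ 1 → κ / (|y| ^ η) ^ 5 ≤ x →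
      m / (|y| ^ η) ^ 4 ≤ ‖LFunction χ (1 + x + I * y)‖ := by
    intro y x hy hx hx1 hxk
    have hT : 1 ≤ |y| ^ η := Real.one_le_rpow (by linarith) h0.le
    set T := |y| ^ η with hTdef
    have h := norm_LFunction_product_ge_one χ hx y
    rw [norm_mul, norm_mul, norm_pow, norm_pow] at h
    have a1 := H1 x hx hx1
    have a2 := H2 (1 + x + 2 * I * y) (by simp; linarith) (by simp; linarith)
      (by simp [abs_mul]; linarith)
    have a3 : |(1 + x + 2 * I * y : ℂ).im| ^ η ≤ 2 * T := by
      simp only [add_im, one_im, ofReal_im, mul_im, mul_re, I_re, I_im, ofReal_re]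
      norm_num [abs_mul]
      exact two_mul_rpow (abs_nonneg _) h0 h1
    have a4 : ‖LFunction (χ ^ 2) (1 + x + 2 * I * y)‖ ≤ C₂ * (2 * T) := a2.trans (by gcongr)
    set ℓ := ‖LFunction χ (1 + x + I * y)‖ with hℓ
    have a5 : 1 ≤ (C₁ / x) ^ 3 * ℓ ^ 4 * (C₂ * (2 * T)) := by
      refine le_trans h ?_
      gcongr
    have a6 : x ^ 3 ≤ D * T * ℓ ^ 4 := by
      have : x ^ 3 * 1 ≤ x ^ 3 * ((C₁ / x) ^ 3 * ℓ ^ 4 * (C₂ * (2 * T))) := by gcongr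
      calc x ^ 3 = x ^ 3 * 1 := by ring
        _ ≤ _ := this
        _ = _ := by rw [hD]; field_simp
    refine le_of_pow_le_pow_left₀ (n := 4) (by norm_num) (norm_nonneg _) ?_
    rw [div_pow, hm4, div_le_iff₀ (by positivity), div_le_iff₀ hD0]
    have a7 : (κ / T ^ 5) ^ 3 ≤ x ^ 3 := by gcongr
    rw [div_pow, div_le_iff₀ (by positivity)] at a7
    calc κ ^ 3 ≤ x ^ 3 * (T ^ 5) ^ 3 := a7
      _ ≤ (D * T * ℓ ^ 4) * (T ^ 5) ^ 3 := by gcongr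
      _ = _ := by ring
  refine ⟨κ, m / 2, hκ0, hκ1, by positivity, fun s hs hs1 hs2 => ?_⟩
  have hT : 1 ≤ |s.im| ^ η := Real.one_le_rpow (by linarith) h0.le
  set T := |s.im| ^ η with hTdef
  have hx0 : 0 < κ / T ^ 5 := by positivity
  have hx1 : κ / T ^ 5 ≤ κ := div_le_self hκ0.le (one_le_pow₀ hT)
  by_cases hc : 1 + κ / T ^ 5 ≤ s.re
  · have := right s.im (s.re - 1) hs (by linarith) (by linarith) (by linarith)
    rw [show ((1 : ℂ) + ((s.re - 1 : ℝ) : ℂ) + I * s.im) = s by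
      apply Complex.ext <;> simp] at this
    refine le_trans ?_ this
    gcongr; linarith
  · push Not at hc
    set x := κ / T ^ 5 with hx
    have hr := right s.im x hs hx0 (by linarith) le_rfl
    set w : ℂ := 1 + x + I * s.im with hw
    have hwre : w.re = 1 + x := by simp [hw]
    have hwim : w.im = s.im := by simp [hw]
    have hmv : ‖LFunction χ w - LFunction χ s‖ ≤ C₃ * T * ‖w - s‖ := by
      have hconv : Convex ℝ (({z : ℂ | 1 - η / 2 ≤ z.re} ∩ {z : ℂ | z.re ≤ 3}) ∩ {z : ℂ | z.im = s.im}) := by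
        refine ((convex_halfSpace_re_ge _).inter (convex_halfSpace_re_le _)).inter ?_
        have : Convex ℝ (Complex.imCLM ⁻¹' {s.im}) :=
          (convex_singleton s.im).linear_preimage (Complex.imCLM : ℂ →ₗ[ℝ] ℝ)
        exact this
      refine hconv.norm_image_sub_le_of_norm_hasDerivWithin_le (𝕜 := ℂ) (f' := deriv (LFunction χ))
        ?_ ?_ ?_ ?_
      · intro z hz
        have hzi : z.im = s.im := hz.2
        exact (L_diffAt χ (ne_one_of_im (by rw [hzi]; linarith))).hasDerivAt.hasDerivWithinAt
      · intro z hz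
        have hzi : z.im = s.im := hz.2
        have := H3 z hz.1.1 hz.1.2 (by rw [hzi]; exact hs)
        rwa [hzi] at this
      · exact ⟨⟨show 1 - η / 2 ≤ s.re by linarith, show s.re ≤ 3 by linarith⟩, rfl⟩
      · exact ⟨⟨show 1 - η / 2 ≤ w.re by rw [hwre]; linarith, show w.re ≤ 3 by rw [hwre]; linarith⟩, hwim⟩
    have hws : ‖w - s‖ ≤ 2 * x := by
      have : w - s = ((1 + x - s.re : ℝ) : ℂ) := by
        apply Complex.ext <;> simp [hw]
      rw [this, Complex.norm_real, Real.norm_eq_abs, abs_of_nonneg (by linarith)]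
      linarith
    have h5 : C₃ * T * ‖w - s‖ ≤ (m / 2) / T ^ 4 := by
      calc C₃ * T * ‖w - s‖ ≤ C₃ * T * (2 * x) := by gcongr
        _ = (4 * κ * C₃ / 2) / T ^ 4 := by rw [hx]; field_simp; ring
        _ ≤ _ := by gcongr
    have h6 : ‖LFunction χ w‖ - ‖LFunction χ s‖ ≤ ‖LFunction χ w - LFunction χ s‖ := norm_sub_norm_le _ _
    have h7 : m / T ^ 4 = (m / 2) / T ^ 4 + (m / 2) / T ^ 4 := by ring
    linarith

end

def Good (η : ℝ) (G : ℂ → ℂ) : Prop :=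
  AnalyticOnNhd ℂ G {s | 1 ≤ s.re} ∧ ∃ κ C : ℝ, 0 < κ ∧ 0 < C ∧ ∀ s : ℂ, 2 ≤ |s.im| →
    1 - κ / (|s.im| ^ η) ^ 5 ≤ s.re → s.re ≤ 2 →
      DifferentiableAt ℂ G s ∧ ‖G s‖ ≤ C * (|s.im| ^ η) ^ 5

lemma Good.add {η : ℝ} {G H : ℂ → ℂ} (hG : Good η G) (hH : Good η H) : Good η (fun s => G s + H s) := by
  obtain ⟨a1, κ1, C1, b1, c1, d1⟩ := hG
  obtain ⟨a2, κ2, C2, b2, c2, d2⟩ := hH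
  refine ⟨a1.add a2, min κ1 κ2, C1 + C2, lt_min b1 b2, by positivity, fun s h1 h2 h3 => ?_⟩
  have e1 := d1 s h1 (le_trans (by gcongr; exact min_le_left _ _) h2) h3
  have e2 := d2 s h1 (le_trans (by gcongr; exact min_le_right _ _) h2) h3
  refine ⟨e1.1.add e2.1, (norm_add_le _ _).trans ?_⟩
  rw [add_mul]; exact add_le_add e1.2 e2.2

lemma Good.const_mul {η : ℝ} {G : ℂ → ℂ} (hG : Good η G) (a : ℂ) : Good η (fun s => a * G s) := by
  obtain ⟨a1, κ1, C1, b1, c1, d1⟩ := hG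
  refine ⟨fun s hs => analyticAt_const.mul (a1 s hs), κ1, (‖a‖ + 1) * C1, b1, by positivity, fun s h1 h2 h3 => ?_⟩
  have e1 := d1 s h1 h2 h3
  refine ⟨e1.1.const_mul a, ?_⟩
  rw [norm_mul, mul_assoc]
  gcongr
  · linarith
  · exact e1.2

lemma Good.zero {η : ℝ} : Good η (fun _ => 0) :=
  ⟨fun _ _ => analyticAt_const, 1, 1, one_pos, one_pos, fun s _ _ _ => ⟨differentiableAt_const _, by
    simp only [norm_zero]; positivity⟩⟩

lemma Good.sum {η : ℝ} {ι : Type*} (S : Finset ι) (G : ι → ℂ → ℂ) (h : ∀ i ∈ S, Good η (G i)) :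
    Good η (fun s => ∑ i ∈ S, G i s) := by
  classical
  induction S using Finset.induction_on with
  | empty => simpa using Good.zero
  | insert a S ha ih =>
    simp only [Finset.sum_insert ha]
    exact (h a (Finset.mem_insert_self _ _)).add (ih fun i hi => h i (Finset.mem_insert_of_mem hi))

lemma L_region {q : ℕ} [NeZero q] (χ : DirichletCharacter ℂ q) (η : ℝ) (h0 : 0 < η) (h1 : η < 1) :
    ∃ κ C : ℝ, 0 < κ ∧ 0 < C ∧ ∀ s : ℂ, 2 ≤ |s.im| → 1 - κ / (|s.im| ^ η) ^ 5 ≤ s.re → s.re ≤ 2 →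
      LFunction χ s ≠ 0 ∧ ‖deriv (LFunction χ) s / LFunction χ s‖ ≤ C * (|s.im| ^ η) ^ 5 := by
  obtain ⟨κ, c, hκ, hκη, hc, H⟩ := L_lower χ η h0 h1
  obtain ⟨C₃, hC₃, H3⟩ := Lderiv_bound χ η h0 h1
  refine ⟨κ, C₃ / c, hκ, by positivity, fun s hs hs1 hs2 => ?_⟩
  have hT : 1 ≤ |s.im| ^ η := Real.one_le_rpow (by linarith) h0.le
  have a := H s hs hs1 hs2
  have hx1 : κ / (|s.im| ^ η) ^ 5 ≤ κ := div_le_self hκ.le (one_le_pow₀ hT)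
  have b := H3 s (by linarith) (by linarith) hs
  set T := |s.im| ^ η
  have hpos : 0 < c / T ^ 4 := by positivity
  have hne : 0 < ‖LFunction χ s‖ := lt_of_lt_of_le hpos a
  refine ⟨norm_pos_iff.1 hne, ?_⟩
  rw [norm_div]
  calc _ ≤ (C₃ * T) / (c / T ^ 4) := by gcongr
    _ = _ := by field_simp

lemma good_nontriv {q : ℕ} [NeZero q] (χ : DirichletCharacter ℂ q) (hχ : χ ≠ 1) (η : ℝ)
    (h0 : 0 < η) (h1 : η < 1) : Good η (fun s => deriv (LFunction χ) s / LFunction χ s) := by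
  have hd := differentiable_LFunction hχ
  have han : ∀ s, AnalyticAt ℂ (LFunction χ) s := fun s => hd.analyticAt s
  obtain ⟨κ, C, hκ, hC, H⟩ := L_region χ η h0 h1
  refine ⟨fun s hs => (han s).deriv.fun_div (han s) (LFunction_ne_zero_of_one_le_re χ (Or.inl hχ) hs),
    κ, C, hκ, hC, fun s a b c => ?_⟩
  have := H s a b c
  exact ⟨(han s).deriv.differentiableAt.fun_div (hd s) this.1, this.2⟩

lemma good_triv (q : ℕ) [NeZero q] (η : ℝ) (h0 : 0 < η) (h1 : η < 1) :
    Good η (fun s => deriv (LFunctionTrivChar₁ q) s / LFunctionTrivChar₁ q s) := by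
  have hd := differentiable_LFunctionTrivChar₁ q
  have han : ∀ s, AnalyticAt ℂ (LFunctionTrivChar₁ q) s := fun s => hd.analyticAt s
  obtain ⟨κ, C, hκ, hC, H⟩ := L_region (1 : DirichletCharacter ℂ q) η h0 h1
  refine ⟨fun s hs => (han s).deriv.fun_div (han s) ?_,
    κ, C + 1, hκ, by positivity, fun s a b c => ?_⟩
  · by_cases h : s = 1
    · rw [h]; exact LFunctionTrivChar₁_apply_one_ne_zero q
    · rw [LFunctionTrivChar₁, Function.update_of_ne h]
      exact mul_ne_zero (sub_ne_zero.2 h) (LFunction_ne_zero_of_one_le_re 1 (Or.inr h) hs)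
  · have h := ne_one_of_im (by linarith : 1 ≤ |s.im|)
    have hh := H s a b c
    have hs := sub_ne_zero.2 h
    have hT : 1 ≤ |s.im| ^ η := Real.one_le_rpow (by linarith) h0.le
    have hne : LFunctionTrivChar₁ q s ≠ 0 := by
      rw [LFunctionTrivChar₁, Function.update_of_ne h]
      exact mul_ne_zero hs hh.1
    refine ⟨(han s).deriv.differentiableAt.fun_div (hd s) hne, ?_⟩
    have e : deriv (LFunctionTrivChar₁ q) s / LFunctionTrivChar₁ q s =
        deriv (LFunction (1 : DirichletCharacter ℂ q)) s / LFunction (1 : DirichletCharacter ℂ q) s + 1 / (s - 1) := by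
      rw [deriv_LFunctionTrivChar₁_apply_of_ne_one _ h, LFunctionTrivChar₁, Function.update_of_ne h]
      have := hh.1
      simp only [LFunctionTrivChar] at *
      field_simp
    beta_reduce
    rw [e]
    refine (norm_add_le _ _).trans ?_
    have h5 : ‖1 / (s - 1)‖ ≤ 1 := by
      rw [norm_div, norm_one, div_le_one (norm_pos_iff.2 hs)]
      have := Complex.abs_im_le_norm (s - 1)
      simp at this; linarith
    have h6 : 1 ≤ (|s.im| ^ η) ^ 5 := one_le_pow₀ hT
    linarith [hh.2]

open ArithmeticFunction.vonMangoldt in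
lemma good_aux {q : ℕ} [NeZero q] (a : ZMod q) (η : ℝ) (h0 : 0 < η) (h1 : η < 1) :
    Good η (LFunctionResidueClassAux a) := by
  classical
  have h := ((good_triv q η h0 h1).const_mul (-1)).add ((Good.sum ({1}ᶜ : Finset (DirichletCharacter ℂ q))
    (fun χ s => χ a⁻¹ * (deriv (LFunction χ) s / LFunction χ s)) (fun χ hχ =>
      (good_nontriv χ (by simpa using hχ) η h0 h1).const_mul _)).const_mul (-1))
  have h' := h.const_mul (q.totient : ℂ)⁻¹
  convert h' using 1
  funext s
  simp only [LFunctionResidueClassAux]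
  congr 1
  simp only [mul_div_assoc]
  rw [neg_div, sub_eq_add_neg, neg_one_mul, neg_one_mul]
  congr!

end PNTAP


namespace PNTAP
open Complex Filter Topology

lemma deriv_bound_large {G : ℂ → ℂ} (hG : Good (1/60) G) :
    ∃ C : ℝ, 0 < C ∧ ∀ s : ℂ, 1 ≤ s.re → s.re ≤ 3/2 → 4 ≤ |s.im| → ∀ j ≤ 2,
      ‖deriv^[j] G s‖ ≤ C * |s.im| ^ (1/4 : ℝ) := by
  obtain ⟨-, κ, C, hκ, hC, h⟩ := hG
  set ρ : ℝ := min (κ/32) (1/2) with hρ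
  have hρ0 : 0 < ρ := lt_min (by positivity) (by norm_num)
  have hρ1 : ρ ≤ 1/2 := min_le_right _ _
  have hρ2 : ρ ≤ κ/32 := min_le_left _ _
  refine ⟨64 * C / ρ ^ 2, by positivity, fun s h1 h2 h3 j hj => ?_⟩
  set T := |s.im| ^ (1/60 : ℝ) with hTd
  have hT : 1 ≤ T := Real.one_le_rpow (by linarith) (by norm_num)
  have hT5 : 1 ≤ T ^ 5 := one_le_pow₀ hT
  have hT15 : |s.im| ^ (1/4 : ℝ) = T ^ 15 := by
    rw [hTd, ← Real.rpow_natCast, ← Real.rpow_mul (abs_nonneg _)]; norm_num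
  have hR0 : 0 < ρ / T ^ 5 := by positivity
  have hR1 : ρ / T ^ 5 ≤ 1/2 := (div_le_self hρ0.le hT5).trans hρ1
  have reg : ∀ z : ℂ, ‖z - s‖ ≤ ρ / T ^ 5 → DifferentiableAt ℂ G z ∧ ‖G z‖ ≤ 32 * C * T ^ 5 := by
    intro z hz
    obtain ⟨i1, i2, i3, i4⟩ := im_near hz (by linarith) (by linarith)
    rw [abs_le] at i4
    have hz1 : 1 ≤ |z.im| ^ (1/60 : ℝ) := Real.one_le_rpow i3 (by norm_num)
    have hTz : |z.im| ^ (1/60 : ℝ) ≤ 2 * T :=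
      (Real.rpow_le_rpow (abs_nonneg _) i2 (by norm_num)).trans
        (two_mul_rpow (abs_nonneg _) (by norm_num) (by norm_num))
    have hTz5 : (|z.im| ^ (1/60 : ℝ)) ^ 5 ≤ 32 * T ^ 5 := by
      calc _ ≤ (2 * T) ^ 5 := by gcongr
        _ = _ := by ring
    have hk : ρ / T ^ 5 ≤ κ / (|z.im| ^ (1/60 : ℝ)) ^ 5 := by
      calc ρ / T ^ 5 ≤ κ / 32 / T ^ 5 := by gcongr
        _ = κ / (32 * T ^ 5) := by rw [div_div]
        _ ≤ _ := by gcongr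
    obtain ⟨d, b⟩ := h z (by linarith) (by linarith) (by linarith)
    refine ⟨d, b.trans ?_⟩
    calc _ ≤ C * (32 * T ^ 5) := by gcongr
      _ = _ := by ring
  have key := Complex.norm_iteratedDeriv_le_of_forall_mem_sphere_norm_le (f := G) (c := s)
    (R := ρ / T ^ 5) (C := 32 * C * T ^ 5) j hR0 ?_ ?_
  · rw [iteratedDeriv_eq_iterate] at key
    refine key.trans ?_
    rw [hT15]
    have e : (j.factorial : ℝ) * (32 * C * T ^ 5) / (ρ / T ^ 5) ^ j
      = (j.factorial : ℝ) * (32 * C) * (T ^ 5 * (T ^ 5) ^ j) * (1/ρ) ^ j := by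
      rw [div_pow, one_div, inv_pow]; field_simp
    have e2 : 64 * C / ρ ^ 2 * T ^ 15 = 2 * (32 * C) * (T ^ 5 * (T ^ 5) ^ 2) * (1/ρ) ^ 2 := by
      field_simp; norm_num
    rw [e, e2]
    have f1 : (j.factorial : ℝ) ≤ 2 := by
      exact_mod_cast (Nat.factorial_le hj)
    have f2 : 1 ≤ 1/ρ := by rw [le_div_iff₀ hρ0]; linarith
    gcongr
  · refine DifferentiableOn.diffContOnCl fun z hz => ?_
    rw [closure_ball _ hR0.ne', mem_closedBall_iff_norm] at hz
    exact (reg z hz).1.differentiableWithinAt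
  · intro z hz
    rw [mem_sphere_iff_norm] at hz
    exact (reg z hz.le).2

lemma deriv_bound_small {G : ℂ → ℂ} (hG : Good (1/60) G) (j : ℕ) :
    ∃ C : ℝ, 0 < C ∧ ∀ s : ℂ, 1 ≤ s.re → s.re ≤ 3/2 → |s.im| ≤ 4 →
      ‖deriv^[j] G s‖ ≤ C := by
  have hc := (hG.1.iterated_deriv j).continuousOn
  have hk : IsCompact ((Set.Icc (1:ℝ) (3/2)) ×ℂ (Set.Icc (-4:ℝ) 4)) := isCompact_Icc.reProdIm isCompact_Icc
  obtain ⟨C, hC⟩ := hk.exists_bound_of_continuousOn (hc.mono fun s hs => (mem_reProdIm.1 hs).1.1)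
  refine ⟨max C 1, by positivity, fun s a b c => (hC s ?_).trans (le_max_left _ _)⟩
  exact mem_reProdIm.2 ⟨⟨a, b⟩, abs_le.1 c⟩

lemma deriv_bound {G : ℂ → ℂ} (hG : Good (1/60) G) :
    ∃ C : ℝ, 0 < C ∧ ∀ s : ℂ, 1 ≤ s.re → s.re ≤ 3/2 → ∀ j ≤ 2,
      ‖deriv^[j] G s‖ ≤ C * (1 + s.im ^ 2) ^ (1/8 : ℝ) := by
  obtain ⟨C, hC, h⟩ := deriv_bound_large hG
  choose D hD h' using deriv_bound_small hG
  refine ⟨C + (D 0 + D 1 + D 2), by have := hD 0; have := hD 1; have := hD 2; positivity,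
    fun s a b j hj => ?_⟩
  have d0 := hD 0
  have d1 := hD 1
  have d2 := hD 2
  have h1 : 1 ≤ (1 + s.im ^ 2) ^ (1/8 : ℝ) := Real.one_le_rpow (by nlinarith) (by norm_num)
  rcases le_total 4 |s.im| with c | c
  · refine (h s a b c j hj).trans ?_
    have : |s.im| ^ (1/4 : ℝ) ≤ (1 + s.im ^ 2) ^ (1/8 : ℝ) := by
      have : |s.im| ^ (1/4 : ℝ) = (s.im ^ 2) ^ (1/8:ℝ) := by
        rw [← sq_abs, ← Real.rpow_natCast, ← Real.rpow_mul (abs_nonneg _)]; norm_num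
      rw [this]
      gcongr
      linarith
    gcongr
    linarith
  · refine (h' j s a b c).trans ?_
    have : D j ≤ C + (D 0 + D 1 + D 2) := by interval_cases j <;> linarith
    exact this.trans (le_mul_of_one_le_right (by positivity) h1)

end PNTAP


namespace PNTAP
open Complex Filter Topology MeasureTheory FourierTransform

lemma dec_integrable : Integrable (fun t : ℝ => (1 + t ^ 2) ^ (-(5/8) : ℝ)) := by
  have := integrable_rpow_neg_one_add_norm_sq (E := ℝ) (μ := volume) (r := 5/4) (by norm_num)
  refine this.congr (Eventually.of_forall fun t => ?_)
  norm_num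

lemma fourier_decay {f f1 f2 : ℝ → ℂ} {B : ℝ} (h1 : ∀ t, HasDerivAt f (f1 t) t)
    (h2 : ∀ t, HasDerivAt f1 (f2 t) t)
    (b0 : ∀ t, ‖f t‖ ≤ B * (1 + t ^ 2) ^ (-(5/8) : ℝ))
    (b1 : ∀ t, ‖f1 t‖ ≤ B * (1 + t ^ 2) ^ (-(5/8) : ℝ))
    (b2 : ∀ t, ‖f2 t‖ ≤ B * (1 + t ^ 2) ^ (-(5/8) : ℝ)) {y : ℝ} (hy : 0 < y) :
    Integrable f ∧
    ‖∫ t : ℝ, cexp (I * t * y) * f t‖ ≤ B * (∫ t : ℝ, (1 + t ^ 2) ^ (-(5/8) : ℝ)) / y ^ 2 := by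
  have hd := dec_integrable.const_mul B
  have e1 : deriv f = f1 := funext fun t => (h1 t).deriv
  have e2 : deriv f1 = f2 := funext fun t => (h2 t).deriv
  have c0 : Differentiable ℝ f := fun t => (h1 t).differentiableAt
  have c1 : Differentiable ℝ f1 := fun t => (h2 t).differentiableAt
  have i0 : Integrable f := hd.mono' c0.continuous.aestronglyMeasurable (Eventually.of_forall b0)
  have i1 : Integrable f1 := hd.mono' c1.continuous.aestronglyMeasurable (Eventually.of_forall b1)
  have i2 : Integrable f2 := hd.mono'
    (by rw [← e2]; exact (measurable_deriv f1).aestronglyMeasurable) (Eventually.of_forall b2)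
  refine ⟨i0, ?_⟩
  have q1 := Real.fourier_deriv i0 c0 (by rwa [e1])
  have q2 := Real.fourier_deriv i1 c1 (by rwa [e2])
  rw [e1] at q1
  rw [e2] at q2
  set w : ℝ := -y / (2 * Real.pi) with hw
  have hpi := Real.pi_pos
  have q3 := congrFun q2 w
  rw [q1] at q3
  have e3 : (2 * Real.pi * I * (w : ℂ)) = -(I * y) := by
    rw [hw]; push_cast
    have : (Real.pi : ℂ) ≠ 0 := by exact_mod_cast hpi.ne'
    field_simp
  simp only [e3, smul_eq_mul] at q3
  have e4 : 𝓕 f w = ∫ t : ℝ, cexp (I * t * y) * f t := by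
    rw [Real.fourier_real_eq_integral_exp_smul]
    congr 1; ext t
    rw [smul_eq_mul]
    congr 2
    push_cast
    linear_combination (-t : ℂ) * e3
  rw [e4] at q3
  have e5 : ‖𝓕 f2 w‖ ≤ B * (∫ t : ℝ, (1 + t ^ 2) ^ (-(5/8) : ℝ)) := by
    rw [Real.fourier_real_eq_integral_exp_smul, ← integral_const_mul]
    refine norm_integral_le_of_norm_le hd (Eventually.of_forall fun t => ?_)
    rw [norm_smul, Complex.norm_exp_ofReal_mul_I, one_mul]
    exact b2 t
  rw [q3] at e5
  simp only [norm_mul, norm_neg, norm_I, one_mul, norm_real, Real.norm_eq_abs, abs_of_pos hy] at e5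
  rw [le_div_iff₀ (by positivity)]
  calc _ = y * (y * ‖∫ t : ℝ, cexp (I * t * y) * f t‖) := by ring
    _ ≤ _ := e5

/-- the kernel -/
noncomputable def kk (a b : ℝ) (t : ℝ) : ℂ := 1 / ((a + I * t) * (b + I * t))

noncomputable def ww (a b : ℝ) (u : ℝ) : ℂ :=
  (cexp (a * (min u 0 : ℝ)) - cexp (b * (min u 0 : ℝ))) / (b - a)

lemma ne_aux {a : ℝ} (ha : 0 < a) (t : ℝ) : (a + I * t : ℂ) ≠ 0 := by
  intro h
  have := congrArg Complex.re h
  simp at this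
  linarith

lemma norm_aux (a : ℝ) (t : ℝ) : ‖(a + I * t : ℂ)‖ = Real.sqrt (a ^ 2 + t ^ 2) := by
  rw [mul_comm]; exact Complex.norm_add_mul_I a t

lemma norm_lower {a : ℝ} (ha : 0 < a) (t : ℝ) :
    min a 1 * Real.sqrt (1 + t ^ 2) ≤ ‖(a + I * t : ℂ)‖ := by
  rw [norm_aux]
  have hm : 0 < min a 1 := lt_min ha one_pos
  have h1 : min a 1 ≤ 1 := min_le_right _ _
  have h2 : min a 1 ≤ a := min_le_left _ _
  refine Real.le_sqrt_of_sq_le ?_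
  rw [mul_pow, Real.sq_sqrt (by positivity)]
  have : (min a 1)^2 ≤ 1 := by nlinarith
  have : (min a 1)^2 ≤ a^2 := by gcongr
  nlinarith [sq_nonneg t]

lemma kk_cont {a b : ℝ} (ha : 0 < a) (hb : 0 < b) : Continuous (kk a b) := by
  unfold kk
  refine Continuous.div continuous_const (by fun_prop) fun t => mul_ne_zero (ne_aux ha t) (ne_aux hb t)

lemma kk_integrable {a b : ℝ} (ha : 0 < a) (hb : 0 < b) : Integrable (kk a b) := by
  have h := integrable_inv_one_add_sq.const_mul (1 / (min a 1 * min b 1))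
  refine h.mono' (kk_cont ha hb).aestronglyMeasurable (Eventually.of_forall fun t => ?_)
  have hm : 0 < min a 1 := lt_min ha one_pos
  have hm' : 0 < min b 1 := lt_min hb one_pos
  have q1 := norm_lower ha t
  have q2 := norm_lower hb t
  have hp : 0 < Real.sqrt (1 + t ^ 2) := Real.sqrt_pos.2 (by positivity)
  rw [kk, norm_div, norm_one, norm_mul, ← one_div, one_div_mul_one_div]
  apply one_div_le_one_div_of_le (by positivity)
  calc min a 1 * min b 1 * (1 + t ^ 2)
      = (min a 1 * Real.sqrt (1 + t ^ 2)) * (min b 1 * Real.sqrt (1 + t ^ 2)) := by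
        rw [mul_mul_mul_comm, Real.mul_self_sqrt (by positivity)]
    _ ≤ _ := by gcongr

lemma ww_cont (a b : ℝ) : Continuous (ww a b) := by
  unfold ww; fun_prop

lemma ww_eq (a b : ℝ) : ww a b = Set.indicator (Set.Iic 0)
    (fun u : ℝ => (cexp (a * u) - cexp (b * u)) / (b - a)) := by
  ext u
  by_cases h : u ≤ 0
  · rw [Set.indicator_of_mem (by exact h), ww, min_eq_left h]
  · rw [Set.indicator_of_notMem (by exact h), ww, min_eq_right (by linarith)]
    simp

lemma ww_integrable {a b : ℝ} (ha : 0 < a) (hb : 0 < b) : Integrable (ww a b) := by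
  rw [ww_eq, integrable_indicator_iff measurableSet_Iic]
  exact ((integrableOn_exp_mul_complex_Iic (a := (a : ℂ)) (by simpa using ha) 0).sub
    (integrableOn_exp_mul_complex_Iic (a := (b : ℂ)) (by simpa using hb) 0)).div_const _

lemma ww_fourier {a b : ℝ} (ha : 0 < a) (hb : 0 < b) (hab : a ≠ b) (ξ : ℝ) :
    𝓕 (ww a b) ξ = kk a b (-(2 * Real.pi) * ξ) := by
  rw [Real.fourier_real_eq_integral_exp_smul]
  have e : ∀ v : ℝ, cexp (((-2 * Real.pi * v * ξ : ℝ) : ℂ) * I) • ww a b v =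
      Set.indicator (Set.Iic 0) (fun u : ℝ =>
        (cexp ((a + I * (-(2 * Real.pi) * ξ : ℝ)) * u) - cexp ((b + I * (-(2 * Real.pi) * ξ : ℝ)) * u)) / (b - a)) v := by
    intro v
    rw [ww_eq, ← Set.indicator_const_smul_apply]
    unfold Set.indicator
    split_ifs
    · beta_reduce
      rw [smul_eq_mul, mul_div_assoc', mul_sub, ← Complex.exp_add, ← Complex.exp_add]
      congr 3 <;> · congr 1; push_cast; ring
    · rfl
  simp_rw [e]
  rw [integral_indicator measurableSet_Iic, integral_div, integral_sub,
    integral_exp_mul_complex_Iic, integral_exp_mul_complex_Iic]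
  · have n1 := ne_aux ha (-(2 * Real.pi) * ξ)
    have n2 := ne_aux hb (-(2 * Real.pi) * ξ)
    have n3 : (b - a : ℂ) ≠ 0 := by
      rw [sub_ne_zero]; exact_mod_cast hab.symm
    rw [kk]
    simp only [ofReal_zero, mul_zero, Complex.exp_zero]
    generalize ((-(2 * Real.pi) * ξ : ℝ) : ℂ) = x at n1 n2
    rw [div_sub_div _ _ n1 n2, div_div, div_eq_div_iff (mul_ne_zero (mul_ne_zero n1 n2) n3)
      (mul_ne_zero n1 n2)]
    ring
  · simpa using hb
  · simpa using ha
  · exact integrableOn_exp_mul_complex_Iic (by simpa using ha) 0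
  · exact integrableOn_exp_mul_complex_Iic (by simpa using hb) 0

lemma J {a b : ℝ} (ha : 0 < a) (hb : 0 < b) (hab : a ≠ b) (u : ℝ) :
    ∫ t : ℝ, cexp (-(I * t * u)) * kk a b t = 2 * Real.pi * ww a b u := by
  have hF : 𝓕 (ww a b) = fun ξ => kk a b (-(2 * Real.pi) * ξ) := funext (ww_fourier ha hb hab)
  have hpi := Real.pi_pos
  have h := Continuous.fourierInv_fourier_eq (ww_cont a b) (ww_integrable ha hb)
    (by rw [hF]; exact (kk_integrable ha hb).comp_mul_left' (by linarith))
  have h2 := congrFun h u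
  rw [Real.fourierInv_eq', hF] at h2
  have e : ∀ v : ℝ, cexp (((2 * Real.pi * inner ℝ v u : ℝ) : ℂ) * I) • kk a b (-(2 * Real.pi) * v)
     = (fun t : ℝ => cexp (-(I * t * u)) * kk a b t) (-(2 * Real.pi) * v) := by
    intro v
    rw [smul_eq_mul]
    congr 2
    simp
    ring
  simp_rw [e] at h2
  rw [Measure.integral_comp_mul_left (fun t : ℝ => cexp (-(I * t * u)) * kk a b t)] at h2
  rw [← h2, abs_inv, abs_neg, abs_of_pos (by positivity), real_smul]
  push_cast
  have : (Real.pi : ℂ) ≠ 0 := by exact_mod_cast hpi.ne'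
  rw [← mul_assoc, mul_inv_cancel₀ (by simpa using this), one_mul]

end PNTAP


namespace PNTAP
open Complex Filter Topology MeasureTheory FourierTransform

noncomputable def MM (K : ℝ) (t : ℝ) : ℂ := (K - 1) * kk 1 K t

lemma inv_norm_le {a : ℝ} (ha : 1 ≤ a) (t : ℝ) : ‖(a + I * t : ℂ)⁻¹‖ ≤ 1 := by
  rw [norm_inv]
  refine inv_le_one_of_one_le₀ ?_
  rw [norm_aux]
  exact Real.one_le_sqrt.2 (by nlinarith [sq_nonneg t])

lemma MM_eq (K t : ℝ) : MM K t = (K - 1) * ((((1:ℝ):ℂ) + I * t)⁻¹ * ((K : ℂ) + I * t)⁻¹) := by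
  rw [MM, kk, one_div, mul_inv]

lemma inv_deriv {a : ℝ} (ha : 0 < a) (t : ℝ) : HasDerivAt (fun t : ℝ => ((a : ℂ) + I * t)⁻¹)
    (-I * ((a : ℂ) + I * t)⁻¹ ^ 2) t := by
  have h1 : HasDerivAt (fun z : ℂ => (a : ℂ) + I * z) I (t : ℂ) := by
    simpa using ((hasDerivAt_id (t : ℂ)).const_mul I).const_add (a : ℂ)
  have h2 := (h1.inv (ne_aux ha t)).comp_ofReal
  refine h2.congr_deriv ?_
  rw [inv_pow, div_eq_mul_inv]

lemma MM_bound {K : ℝ} (hK : 2 ≤ K) (t : ℝ) :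
    ‖MM K t‖ ≤ Real.sqrt K * (1 + t ^ 2) ^ (-(3/4) : ℝ) := by
  have h0 : 0 < 1 + t ^ 2 := by positivity
  have h1 : 0 < K ^ 2 + t ^ 2 := by positivity
  have e1 : (1 + t ^ 2) ^ (-(3/4) : ℝ) = (Real.sqrt (1 + t ^ 2))⁻¹ * (1 + t ^ 2) ^ (-(1/4) : ℝ) := by
    rw [Real.sqrt_eq_rpow, ← Real.rpow_neg h0.le, ← Real.rpow_add h0]; norm_num
  rw [MM_eq, norm_mul, norm_mul, norm_inv, norm_inv, norm_aux, norm_aux, e1, one_pow]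
  have e2 : ‖(K - 1 : ℂ)‖ ≤ K := by
    have : (K - 1 : ℂ) = ((K - 1 : ℝ) : ℂ) := by push_cast; rfl
    rw [this, norm_real, Real.norm_eq_abs, abs_of_pos (by linarith)]; linarith
  have e3 : K * (Real.sqrt (K ^ 2 + t ^ 2))⁻¹ ≤ Real.sqrt K * (1 + t ^ 2) ^ (-(1/4) : ℝ) := by
    refine le_of_pow_le_pow_left₀ (n := 4) (by norm_num) (by positivity) ?_
    have a1 : Real.sqrt (K ^ 2 + t ^ 2) ^ 4 = (K ^ 2 + t ^ 2) ^ 2 := by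
      rw [show (4:ℕ) = 2 * 2 by norm_num, pow_mul, Real.sq_sqrt h1.le]
    have a2 : Real.sqrt K ^ 4 = K ^ 2 := by
      rw [show (4:ℕ) = 2 * 2 by norm_num, pow_mul, Real.sq_sqrt (by linarith)]
    have a3 : ((1 + t ^ 2) ^ (-(1/4) : ℝ)) ^ 4 = (1 + t ^ 2)⁻¹ := by
      rw [← Real.rpow_natCast, ← Real.rpow_mul h0.le]; norm_num [Real.rpow_neg_one]
    rw [mul_pow, mul_pow, inv_pow, a1, a2, a3, ← div_eq_mul_inv, ← div_eq_mul_inv,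
      div_le_div_iff₀ (by positivity) h0]
    have : K ^ 4 * (1 + t ^ 2) = K ^ 2 * (K ^ 2 * (1 + t ^ 2)) := by ring
    rw [this]
    gcongr
    nlinarith [sq_nonneg t, sq_nonneg (K * t), sq_nonneg (t ^ 2), mul_pos (show 0 < K by linarith) (show 0 < K by linarith), sq_nonneg (K^2 - 1)]
  calc _ ≤ K * ((Real.sqrt (1 + t ^ 2))⁻¹ * (Real.sqrt (K ^ 2 + t ^ 2))⁻¹) := by gcongr
    _ = (Real.sqrt (1 + t ^ 2))⁻¹ * (K * (Real.sqrt (K ^ 2 + t ^ 2))⁻¹) := by ring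
    _ ≤ (Real.sqrt (1 + t ^ 2))⁻¹ * (Real.sqrt K * (1 + t ^ 2) ^ (-(1/4) : ℝ)) := by gcongr
    _ = _ := by ring

lemma line_deriv {G : ℂ → ℂ} (c : ℂ) (t : ℝ) (h : DifferentiableAt ℂ G (c + I * t)) :
    HasDerivAt (fun t : ℝ => G (c + I * t)) (I * deriv G (c + I * t)) t := by
  have h1 : HasDerivAt (fun z : ℂ => c + I * z) I (t : ℂ) := by
    simpa using ((hasDerivAt_id (t : ℂ)).const_mul I).const_add c
  have h2 := (h.hasDerivAt.comp (t : ℂ) h1).comp_ofReal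
  exact h2.congr_deriv (mul_comm _ _)

lemma main_decay {G : ℂ → ℂ} (hG : Good (1/60) G) :
    ∃ C : ℝ, 0 < C ∧ ∀ l K y : ℝ, 0 < l → l ≤ 1/2 → 2 ≤ K → 0 < y →
      Integrable (fun t : ℝ => MM K t * G ((1 + l : ℝ) + I * t)) ∧
      ‖∫ t : ℝ, cexp (I * t * y) * (MM K t * G ((1 + l : ℝ) + I * t))‖
        ≤ C * Real.sqrt K / y ^ 2 := by
  obtain ⟨C, hC, hb⟩ := deriv_bound hG
  set c0 := ∫ t : ℝ, (1 + t ^ 2) ^ (-(5/8) : ℝ) with hc0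
  have hc0' : 0 ≤ c0 := integral_nonneg fun t => by positivity
  refine ⟨11 * C * (c0 + 1), by positivity, fun l K y hl hl2 hK hy => ?_⟩
  set α : ℝ → ℂ := fun t => (((1:ℝ):ℂ) + I * t)⁻¹ with hα
  set β : ℝ → ℂ := fun t => ((K:ℂ) + I * t)⁻¹ with hβ
  have dα : ∀ t, HasDerivAt α (-I * α t ^ 2) t := fun t => inv_deriv one_pos t
  have dβ : ∀ t, HasDerivAt β (-I * β t ^ 2) t := fun t => inv_deriv (by linarith) t
  have nα : ∀ t, ‖α t‖ ≤ 1 := fun t => inv_norm_le le_rfl t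
  have nβ : ∀ t, ‖β t‖ ≤ 1 := fun t => inv_norm_le (by linarith) t
  have hM : MM K = fun t => (K - 1) * (α t * β t) := funext fun t => MM_eq K t
  have dM : ∀ t, HasDerivAt (MM K) (-I * (α t + β t) * MM K t) t := by
    intro t
    rw [hM]
    refine (((dα t).mul (dβ t)).const_mul ((K:ℂ) - 1)).congr_deriv ?_
    ring
  have dM2 : ∀ t, HasDerivAt (fun t => -I * (α t + β t) * MM K t)
      (-((α t ^ 2 + β t ^ 2) + (α t + β t) ^ 2) * MM K t) t := by
    intro t
    refine ((((dα t).add (dβ t)).const_mul (-I)).mul (dM t)).congr_deriv ?_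
    simp only [Pi.add_apply]
    linear_combination (((α t ^ 2 + β t ^ 2) + (α t + β t) ^ 2) * MM K t) * I_sq
  set c : ℂ := ((1 + l : ℝ) : ℂ) with hc
  have hre : ∀ t : ℝ, (c + I * t).re = 1 + l := fun t => by simp [hc]
  have him : ∀ t : ℝ, (c + I * t).im = t := fun t => by simp [hc]
  have mem : ∀ t : ℝ, c + I * t ∈ {s : ℂ | 1 ≤ s.re} := fun t => by
    rw [Set.mem_ofPred_eq, hre]; linarith
  have dg : ∀ t : ℝ, HasDerivAt (fun t : ℝ => G (c + I * t)) (I * deriv G (c + I * t)) t :=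
    fun t => line_deriv c t (hG.1 _ (mem t)).differentiableAt
  have dg2 : ∀ t : ℝ, HasDerivAt (fun t : ℝ => I * deriv G (c + I * t))
      (I * (I * deriv (deriv G) (c + I * t))) t :=
    fun t => (line_deriv c t (hG.1.deriv _ (mem t)).differentiableAt).const_mul I
  set g1 : ℝ → ℂ := fun t => I * deriv G (c + I * t) with hg1
  set g2 : ℝ → ℂ := fun t => I * (I * deriv (deriv G) (c + I * t)) with hg2
  set P : ℝ → ℝ := fun t => C * (1 + t ^ 2) ^ (1/8 : ℝ) with hP
  have hP0 : ∀ t, 0 ≤ P t := fun t => by positivity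
  have n0 : ∀ t : ℝ, ‖G (c + I * t)‖ ≤ P t := fun t => by
    have := hb (c + I * t) (by rw [hre]; linarith) (by rw [hre]; linarith) 0 (by norm_num)
    rwa [him] at this
  have n1 : ∀ t : ℝ, ‖g1 t‖ ≤ P t := fun t => by
    have := hb (c + I * t) (by rw [hre]; linarith) (by rw [hre]; linarith) 1 (by norm_num)
    rw [him] at this
    simpa [hg1, hP] using this
  have n2 : ∀ t : ℝ, ‖g2 t‖ ≤ P t := fun t => by
    have := hb (c + I * t) (by rw [hre]; linarith) (by rw [hre]; linarith) 2 (by norm_num)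
    rw [him] at this
    simpa [hg2, hP] using this
  set Q : ℝ → ℝ := fun t => Real.sqrt K * (1 + t ^ 2) ^ (-(3/4) : ℝ) with hQ
  have hQ0 : ∀ t, 0 ≤ Q t := fun t => by positivity
  have m0 : ∀ t, ‖MM K t‖ ≤ Q t := fun t => MM_bound hK t
  have s1 : ∀ t, ‖α t + β t‖ ≤ 2 := fun t => (norm_add_le _ _).trans (by linarith [nα t, nβ t])
  have m1 : ∀ t, ‖-I * (α t + β t) * MM K t‖ ≤ 2 * Q t := fun t => by
    rw [norm_mul, norm_mul, norm_neg, norm_I, one_mul]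
    exact mul_le_mul (s1 t) (m0 t) (norm_nonneg _) (by norm_num)
  have m2 : ∀ t, ‖-((α t ^ 2 + β t ^ 2) + (α t + β t) ^ 2) * MM K t‖ ≤ 6 * Q t := fun t => by
    rw [norm_mul, norm_neg]
    refine mul_le_mul ?_ (m0 t) (norm_nonneg _) (by norm_num)
    have a1 : ‖α t ^ 2‖ ≤ 1 := by rw [norm_pow]; exact pow_le_one₀ (norm_nonneg _) (nα t)
    have a2 : ‖β t ^ 2‖ ≤ 1 := by rw [norm_pow]; exact pow_le_one₀ (norm_nonneg _) (nβ t)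
    have a3 : ‖(α t + β t) ^ 2‖ ≤ 4 := by
      rw [norm_pow]; nlinarith [s1 t, norm_nonneg (α t + β t)]
    have a4 := norm_add_le (α t ^ 2 + β t ^ 2) ((α t + β t) ^ 2)
    have a5 := norm_add_le (α t ^ 2) (β t ^ 2)
    linarith
  have hQP : ∀ t, Q t * P t = (C * Real.sqrt K) * (1 + t ^ 2) ^ (-(5/8) : ℝ) := fun t => by
    have h0 : 0 < 1 + t ^ 2 := by positivity
    have : (1 + t ^ 2) ^ (-(5/8) : ℝ) = (1 + t ^ 2) ^ (-(3/4) : ℝ) * (1 + t ^ 2) ^ (1/8 : ℝ) := by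
      rw [← Real.rpow_add h0]; norm_num
    rw [this]
    simp only [hQ, hP]; ring
  have tri : ∀ (x z : ℂ) (A B : ℝ), ‖x‖ ≤ A → ‖z‖ ≤ B → ‖x * z‖ ≤ A * B := fun x z A B h1 h2 => by
    rw [norm_mul]; exact mul_le_mul h1 h2 (norm_nonneg _) ((norm_nonneg _).trans h1)
  have key := fourier_decay (f := fun t => MM K t * G (c + I * t))
    (f1 := fun t => -I * (α t + β t) * MM K t * G (c + I * t) + MM K t * g1 t)
    (f2 := fun t => (-((α t ^ 2 + β t ^ 2) + (α t + β t) ^ 2) * MM K t * G (c + I * t)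
      + -I * (α t + β t) * MM K t * g1 t) + (-I * (α t + β t) * MM K t * g1 t + MM K t * g2 t))
    (B := 11 * (C * Real.sqrt K)) (fun t => (dM t).mul (dg t))
    (fun t => ((dM2 t).mul (dg t)).add ((dM t).mul (dg2 t))) ?_ ?_ ?_ hy
  · refine ⟨key.1, key.2.trans ?_⟩
    rw [← hc0]
    have : 0 ≤ 11 * C * Real.sqrt K := by positivity
    refine div_le_div_of_nonneg_right ?_ (by positivity)
    nlinarith
  · intro t
    rw [mul_assoc 11, ← hQP]
    have := tri _ _ _ _ (m0 t) (n0 t)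
    have := mul_nonneg (hQ0 t) (hP0 t)
    beta_reduce
    linarith
  · intro t
    rw [mul_assoc 11, ← hQP]
    have a1 := tri _ _ _ _ (m1 t) (n0 t)
    have a2 := tri _ _ _ _ (m0 t) (n1 t)
    have := mul_nonneg (hQ0 t) (hP0 t)
    refine (norm_add_le _ _).trans ?_
    linarith
  · intro t
    rw [mul_assoc 11, ← hQP]
    have a1 := tri _ _ _ _ (m2 t) (n0 t)
    have a2 := tri _ _ _ _ (m1 t) (n1 t)
    have a3 := tri _ _ _ _ (m0 t) (n2 t)
    have := mul_nonneg (hQ0 t) (hP0 t)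
    refine (norm_add_le _ _).trans ((add_le_add (norm_add_le _ _) (norm_add_le _ _)).trans ?_)
    linarith

end PNTAP


namespace PNTAP
open Complex Filter Topology MeasureTheory FourierTransform ArithmeticFunction.vonMangoldt

lemma norm_cexp (x y : ℝ) : ‖cexp (I * x * y)‖ = 1 := by
  have : (I * x * y : ℂ) = ((x * y : ℝ) : ℂ) * I := by push_cast; ring
  rw [this, Complex.norm_exp_ofReal_mul_I]

lemma int_exp {k : ℝ → ℂ} (hk : Integrable k) (y : ℝ) :
    Integrable (fun t : ℝ => cexp (I * t * y) * k t) := by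
  refine hk.norm.mono' ((Continuous.aestronglyMeasurable (by fun_prop)).mul hk.1)
    (Eventually.of_forall fun t => ?_)
  rw [norm_mul, norm_cexp, one_mul]

lemma MM_integrable {K : ℝ} (hK : 0 < K) : Integrable (MM K) :=
  (kk_integrable one_pos hK).const_mul _

noncomputable def wr (K u : ℝ) : ℝ := Real.exp (min u 0) - Real.exp (K * min u 0)

lemma wr_eq {K : ℝ} (hK : 2 ≤ K) (u : ℝ) : ((K:ℂ) - 1) * ww 1 K u = (wr K u : ℂ) := by
  have : (K - 1 : ℂ) ≠ 0 := by
    rw [sub_ne_zero]; norm_cast; linarith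
  rw [ww, wr]
  push_cast
  field_simp

lemma wr_nonneg {K : ℝ} (hK : 2 ≤ K) (u : ℝ) : 0 ≤ wr K u := by
  rw [wr, sub_nonneg, Real.exp_le_exp]
  nlinarith [min_le_right u 0]

lemma wr_zero {K u : ℝ} (hu : 0 ≤ u) : wr K u = 0 := by
  rw [wr, min_eq_right hu]; simp

lemma wr_le (K : ℝ) (u : ℝ) : wr K u ≤ Real.exp u := by
  rw [wr]
  have := Real.exp_pos (K * min u 0)
  have : Real.exp (min u 0) ≤ Real.exp u := Real.exp_le_exp.2 (min_le_left _ _)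
  linarith

lemma term_eq (f : ℕ → ℝ) (l t : ℝ) {n : ℕ} (hn : n ≠ 0) :
    LSeries.term (fun n => (f n : ℂ)) ((1 + l : ℝ) + I * t) n =
      (f n * Real.exp (-(1 + l) * Real.log n) : ℝ) * cexp (-(I * t * Real.log n)) := by
  rw [LSeries.term_def, if_neg hn, Complex.cpow_def_of_ne_zero (by exact_mod_cast hn),
    ← Complex.natCast_log, div_eq_mul_inv, ← Complex.exp_neg]
  push_cast
  rw [mul_assoc, ← Complex.exp_add]
  congr 2
  ring

noncomputable def pole (K l y : ℝ) : ℝ :=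
  (Real.exp (-y) - Real.exp (-l * y)) / (l - 1) - (Real.exp (-K * y) - Real.exp (-l * y)) / (l - K)

lemma pole_int {K l y : ℝ} (hK : 2 ≤ K) (hl : 0 < l) (hl2 : l ≤ 1/2) (hy : 0 < y) :
    Integrable (fun t : ℝ => cexp (I * t * y) * (MM K t / (l + I * t))) ∧
    ∫ t : ℝ, cexp (I * t * y) * (MM K t / (l + I * t)) = 2 * Real.pi * pole K l y := by
  have e : (fun t : ℝ => cexp (I * t * y) * (MM K t / (l + I * t))) =
      fun t : ℝ => cexp (-(I * t * (-y : ℝ))) * kk 1 l t - cexp (-(I * t * (-y : ℝ))) * kk K l t := by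
    ext t
    have n1 := ne_aux one_pos t
    have n2 := ne_aux (show 0 < K by linarith) t
    have n3 := ne_aux hl t
    have : MM K t / (l + I * t) = kk 1 l t - kk K l t := by
      rw [MM, kk, kk, kk, mul_one_div, div_div, div_sub_div _ _ (mul_ne_zero n1 n3) (mul_ne_zero n2 n3),
        div_eq_div_iff (mul_ne_zero (mul_ne_zero n1 n2) n3)
          (mul_ne_zero (mul_ne_zero n1 n3) (mul_ne_zero n2 n3))]
      push_cast
      ring
    rw [this, ← mul_sub]
    congr 2
    push_cast; ring
  have hi : ∀ a : ℝ, 0 < a → Integrable (fun t : ℝ => cexp (-(I * t * (-y : ℝ))) * kk a l t) := by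
    intro a ha
    refine (int_exp (kk_integrable ha hl) y).congr (Eventually.of_forall fun t => ?_)
    beta_reduce
    congr 2
    push_cast; ring
  rw [e]
  refine ⟨(hi 1 one_pos).sub (hi K (by linarith)), ?_⟩
  rw [integral_sub (hi 1 one_pos) (hi K (by linarith)), J one_pos hl (by linarith),
    J (by linarith) hl (by linarith), ww, ww, pole, min_eq_left (by linarith)]
  push_cast
  simp only [one_mul, neg_mul, mul_neg]
  ring

lemma taub_l {q : ℕ} [NeZero q] {a : ZMod q} (ha : IsUnit a) :
    ∃ C : ℝ, 0 < C ∧ ∀ l K : ℝ, ∀ N : ℕ, 0 < l → l ≤ 1/2 → 2 ≤ K → 2 ≤ N →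
      2 * Real.pi * ((q.totient : ℝ)⁻¹ * pole K l (Real.log N)) - C * Real.sqrt K / (Real.log N) ^ 2 ≤
      2 * Real.pi * ((∑ n ∈ Finset.range (N + 1), residueClass a n) / N) := by
  obtain ⟨C, hC, hdec⟩ := main_decay (good_aux a (1/60) (by norm_num) (by norm_num))
  refine ⟨C, hC, fun l K N hl hl2 hK hN => ?_⟩
  have hN0 : (0:ℝ) < N := by positivity
  set y := Real.log N with hyd
  have hy : 0 < y := Real.log_pos (by exact_mod_cast hN)
  obtain ⟨i1, b1⟩ := hdec l K y hl hl2 hK hy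
  obtain ⟨i2, b2⟩ := pole_int hK hl hl2 hy
  set f : ℕ → ℂ := fun n => (residueClass a n : ℂ) with hf
  set c : ℂ := ((1 + l : ℝ) : ℂ) with hc
  have hre : ∀ t : ℝ, (c + I * t).re = 1 + l := fun t => by simp [hc]
  set F : ℕ → ℝ → ℂ := fun n t => cexp (I * t * y) * (MM K t * LSeries.term f (c + I * t) n) with hF
  have hF0 : ∀ t, F 0 t = 0 := fun t => by simp [hF]
  have hFn : ∀ n : ℕ, n ≠ 0 → ∀ t, F n t =
      ((residueClass a n * Real.exp (-(1 + l) * Real.log n) : ℝ) : ℂ) *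
      (((K:ℂ) - 1) * (cexp (-(I * t * (Real.log n - y : ℝ))) * kk 1 K t)) := by
    intro n hn t
    simp only [hF, hf, hc]
    rw [term_eq _ _ _ hn, MM]
    have : cexp (-(I * t * (Real.log n - y : ℝ))) = cexp (I * t * y) * cexp (-(I * t * Real.log n)) := by
      rw [← Complex.exp_add]; congr 1; push_cast; ring
    rw [this]
    ring
  have hkint : ∀ u : ℝ, Integrable (fun t : ℝ => cexp (-(I * t * u)) * kk 1 K t) := by
    intro u
    refine (int_exp (kk_integrable one_pos (show 0 < K by linarith)) (-u)).congr
      (Eventually.of_forall fun t => ?_)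
    beta_reduce
    congr 2
    push_cast; ring
  have hFint : ∀ n, Integrable (F n) := by
    intro n
    rcases eq_or_ne n 0 with rfl | hn
    · rw [show F 0 = fun _ => 0 from funext hF0]; exact integrable_zero _ _ _
    · rw [show F n = _ from funext (hFn n hn)]
      exact ((hkint _).const_mul _).const_mul _
  have hFval : ∀ n, n ≠ 0 → ∫ t, F n t = ((2 * Real.pi * (residueClass a n * Real.exp (-(1 + l) * Real.log n) *
      wr K (Real.log n - y)) : ℝ) : ℂ) := by
    intro n hn
    simp_rw [hFn n hn]
    rw [integral_const_mul, integral_const_mul, J one_pos (by linarith) (by linarith)]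
    have := wr_eq hK (Real.log n - y)
    push_cast at this ⊢
    rw [← this]
    ring
  have hsumm : Summable (LSeries.term f c) := by
    refine LSeriesSummable_of_abscissaOfAbsConv_lt_re ?_
    refine (abscissaOfAbsConv_residueClass_le_one a).trans_lt ?_
    have : (1:ℝ) < c.re := by simp [hc]; linarith
    exact_mod_cast this
  have hnorm : ∀ n t, ‖F n t‖ = ‖MM K t‖ * ‖LSeries.term f c n‖ := by
    intro n t
    simp only [hF]
    rw [norm_mul, norm_cexp, one_mul, norm_mul, LSeries.norm_term_eq, LSeries.norm_term_eq, hre]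
    simp [hc]
  have hs2 : Summable fun n => ∫ t, ‖F n t‖ := by
    simp_rw [hnorm, integral_mul_const]
    exact hsumm.norm.mul_left _
  have hsum := hasSum_integral_of_summable_integral_norm hFint hs2
  have htot : ∀ t : ℝ, ∑' n, F n t = cexp (I * t * y) * (MM K t * LFunctionResidueClassAux a (c + I * t))
      + ((q.totient : ℂ)⁻¹) * (cexp (I * t * y) * (MM K t / (l + I * t))) := by
    intro t
    have h1 := eqOn_LFunctionResidueClassAux ha (x := c + I * t) (by
      rw [Set.mem_ofPred_eq, hre]; linarith)
    have h2 : c + I * t - 1 = l + I * t := by rw [hc]; push_cast; ring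
    beta_reduce at h1
    rw [h1, h2]
    simp only [hF]
    rw [tsum_mul_left, tsum_mul_left]
    change _ * (_ * LSeries f (c + I * t)) = _
    ring
  simp_rw [htot] at hsum
  rw [integral_add (int_exp i1 y) (i2.const_mul _), integral_const_mul, b2] at hsum
  have hfin := hsum.tsum_eq
  rw [tsum_eq_sum (s := Finset.range (N + 1))] at hfin
  swap
  · intro n hn
    have hn' : N + 1 ≤ n := by simpa using hn
    rw [hFval n (by omega), wr_zero]
    · simp
    · rw [hyd, sub_nonneg]
      refine Real.log_le_log hN0 ?_
      exact_mod_cast (by omega : N ≤ n)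
  have hre2 := congrArg Complex.re hfin
  rw [Complex.re_sum, Complex.add_re] at hre2
  have hp : ((q.totient : ℂ)⁻¹ * (2 * Real.pi * (pole K l y : ℂ))).re =
      2 * Real.pi * ((q.totient : ℝ)⁻¹ * pole K l y) := by
    have : ((q.totient : ℂ)⁻¹ * (2 * Real.pi * (pole K l y : ℂ))) =
      ((2 * Real.pi * ((q.totient : ℝ)⁻¹ * pole K l y) : ℝ) : ℂ) := by push_cast; ring
    rw [this, ofReal_re]
  rw [hp] at hre2
  have hge := (abs_le.1 ((Complex.abs_re_le_norm _).trans b1)).1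
  have hle : ∑ n ∈ Finset.range (N + 1), (∫ t, F n t).re ≤
      2 * Real.pi * ((∑ n ∈ Finset.range (N + 1), residueClass a n) / N) := by
    rw [Finset.sum_div, Finset.mul_sum]
    refine Finset.sum_le_sum fun n _ => ?_
    have hr := residueClass_nonneg a n
    rcases eq_or_ne n 0 with rfl | hn
    · simp_rw [hF0]; simp only [integral_zero, zero_re]
      have := Real.pi_pos
      positivity
    · rw [hFval n hn, ofReal_re, mul_assoc (residueClass a n), div_eq_mul_inv]
      have hpi := Real.pi_pos
      gcongr
      have hlog : 0 ≤ Real.log n := Real.log_natCast_nonneg n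
      calc Real.exp (-(1 + l) * Real.log n) * wr K (Real.log n - y)
          ≤ Real.exp (-(1 + l) * Real.log n) * Real.exp (Real.log n - y) := by
            gcongr; exact wr_le _ _
        _ = Real.exp (-l * Real.log n - y) := by rw [← Real.exp_add]; congr 1; ring
        _ ≤ Real.exp (-y) := by
            apply Real.exp_le_exp.2
            nlinarith
        _ = (N:ℝ)⁻¹ := by rw [hyd, Real.exp_neg, Real.exp_log hN0]
  linarith

lemma pole_tendsto {K y : ℝ} (hK : 2 ≤ K) : Tendsto (fun l => pole K l y) (𝓝[>] 0)
    (𝓝 (1 - Real.exp (-y) - (1 - Real.exp (-K * y)) / K)) := by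
  have : ContinuousAt (fun l => pole K l y) 0 := by
    unfold pole
    refine ContinuousAt.sub (ContinuousAt.div (by fun_prop) (by fun_prop) (by norm_num))
      (ContinuousAt.div (by fun_prop) (by fun_prop) (by simp; linarith))
  have h := this.tendsto.mono_left (nhdsWithin_le_nhds (s := Set.Ioi 0))
  convert h using 2
  simp only [pole, neg_zero, zero_mul, Real.exp_zero, zero_sub]
  have : K ≠ 0 := by linarith
  field_simp
  ring

theorem taub {q : ℕ} [NeZero q] {a : ZMod q} (ha : IsUnit a) :
    ∃ C : ℝ, 0 < C ∧ ∀ K : ℝ, ∀ N : ℕ, 2 ≤ K → 2 ≤ N →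
      (q.totient : ℝ)⁻¹ * (1 - 1 / K - 1 / N) - C * Real.sqrt K / (Real.log N) ^ 2 ≤
      (∑ n ∈ Finset.range (N + 1), residueClass a n) / N := by
  obtain ⟨C, hC, h⟩ := taub_l ha
  have hpi := Real.pi_pos
  refine ⟨C / (2 * Real.pi), by positivity, fun K N hK hN => ?_⟩
  have hN0 : (0:ℝ) < N := by positivity
  have hlim := ((pole_tendsto (y := Real.log N) hK).const_mul ((q.totient : ℝ)⁻¹)).const_mul (2 * Real.pi)
  have hev : ∀ᶠ l in 𝓝[>] (0:ℝ), 2 * Real.pi * ((q.totient : ℝ)⁻¹ * pole K l (Real.log N)) ≤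
      2 * Real.pi * ((∑ n ∈ Finset.range (N + 1), residueClass a n) / N) + C * Real.sqrt K / (Real.log N) ^ 2 := by
    filter_upwards [Ioc_mem_nhdsGT (show (0:ℝ) < 1/2 by norm_num)] with l hl
    have := h l K N hl.1 hl.2 hK hN
    linarith
  have key := le_of_tendsto hlim hev
  have e1 : Real.exp (-Real.log N) = 1 / N := by rw [Real.exp_neg, Real.exp_log hN0, one_div]
  rw [e1] at key
  have e2 : 1 - 1 / K - 1 / (N:ℝ) ≤ 1 - 1 / N - (1 - Real.exp (-K * Real.log N)) / K := by
    have : (1 - Real.exp (-K * Real.log N)) / K ≤ 1 / K := by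
      have := Real.exp_pos (-K * Real.log N)
      gcongr
      linarith
    linarith
  have e3 : (q.totient : ℝ)⁻¹ * (1 - 1 / K - 1 / (N:ℝ)) ≤
    (q.totient : ℝ)⁻¹ * (1 - 1 / N - (1 - Real.exp (-K * Real.log N)) / K) := by gcongr
  have e4 : 2 * Real.pi * ((q.totient : ℝ)⁻¹ * (1 - 1 / K - 1 / (N:ℝ))) ≤
    2 * Real.pi * ((q.totient : ℝ)⁻¹ * (1 - 1 / N - (1 - Real.exp (-K * Real.log N)) / K)) := by gcongr
  have e5 : C * Real.sqrt K / (Real.log N) ^ 2 = 2 * Real.pi * (C / (2 * Real.pi) * Real.sqrt K / (Real.log N) ^ 2) := by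
    field_simp
  rw [e5] at key
  have := e4.trans key
  rw [← mul_add] at this
  have := le_of_mul_le_mul_left this (by positivity)
  linarith

end PNTAP


namespace PNTAP
open Filter Topology ArithmeticFunction.vonMangoldt

noncomputable def cnt {q : ℕ} (a : ZMod q) (N : ℕ) : ℕ :=
  ((Finset.range N).filter (fun p => p.Prime ∧ ((p : ℕ) : ZMod q) = a)).card

lemma sum_le_cnt {q : ℕ} (a : ZMod q) {N : ℕ} (hN : 2 ≤ N) :
    ∑ n ∈ Finset.range (N + 1), residueClass a n ≤
      cnt a N * Real.log N + Real.log N + 2 * Real.sqrt N * Real.log N := by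
  classical
  have hN0 : (0:ℝ) < N := by positivity
  have hL : 0 ≤ Real.log N := Real.log_natCast_nonneg N
  have h1 : ∀ n ∈ Finset.range (N + 1), residueClass a n ≤
      (if n.Prime ∧ ((n : ℕ) : ZMod q) = a then Real.log N else 0) +
      (if ¬ n.Prime then ArithmeticFunction.vonMangoldt n else 0) := by
    intro n hn
    by_cases hp : n.Prime
    · by_cases ha : ((n : ℕ) : ZMod q) = a
      · rw [if_pos ⟨hp, ha⟩, if_neg (by simpa using hp), add_zero]
        refine (residueClass_le a n).trans ?_
        rw [ArithmeticFunction.vonMangoldt_apply_prime hp]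
        refine Real.log_le_log (by exact_mod_cast hp.pos) ?_
        have := Finset.mem_range.1 hn
        exact_mod_cast (by omega : n ≤ N)
      · rw [if_neg (by tauto), if_neg (by simpa using hp), add_zero]
        unfold ArithmeticFunction.vonMangoldt.residueClass
        rw [Set.indicator_of_notMem (by simpa using ha)]
    · rw [if_neg (by tauto), if_pos hp, zero_add]
      exact residueClass_le a n
  refine (Finset.sum_le_sum h1).trans ?_
  rw [Finset.sum_add_distrib]
  refine add_le_add ?_ ?_
  · rw [← Finset.sum_filter, Finset.sum_const, nsmul_eq_mul]
    have : (((Finset.range (N + 1)).filter (fun p => p.Prime ∧ ((p : ℕ) : ZMod q) = a)).card : ℝ)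
        ≤ cnt a N + 1 := by
      rw [cnt, Finset.range_add_one, Finset.filter_insert]
      split_ifs
      · exact_mod_cast Finset.card_insert_le _ _
      · linarith
    nlinarith
  · have h2 := Chebyshev.psi_sub_theta_le (x := N) (by exact_mod_cast (by omega : 1 ≤ N))
    rw [Chebyshev.psi_sub_theta_eq_sum_not_prime, Nat.floor_natCast] at h2
    refine le_trans (le_of_eq ?_) h2
    rw [← Finset.sum_filter]
    symm
    refine Finset.sum_subset ?_ ?_
    · intro n hn
      simp only [Finset.mem_filter, Finset.mem_Ioc, Finset.mem_range] at hn ⊢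
      exact ⟨by omega, hn.2⟩
    · intro n hn hn'
      simp only [Finset.mem_filter, Finset.mem_Ioc, Finset.mem_range] at hn hn'
      have : n = 0 := by
        by_contra h0
        exact hn' ⟨⟨by omega, by omega⟩, hn.2⟩
      subst this
      simp

lemma err_tendsto (B : ℝ) : Tendsto (fun N : ℕ => Real.log N / N + B * (Real.sqrt (Real.log N))⁻¹ +
    2 * ((Real.log N) ^ 2 / Real.sqrt N) + (Real.log N) ^ 2 / N) atTop (𝓝 0) := by
  have key : ∀ (s r : ℝ), 0 < r → Tendsto (fun x : ℝ => Real.log x ^ s / x ^ r) atTop (𝓝 0) :=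
    fun s r hr => (isLittleO_log_rpow_rpow_atTop s hr).tendsto_div_nhds_zero
  have h1 : Tendsto (fun x : ℝ => Real.log x / x) atTop (𝓝 0) := by simpa using key 1 1 one_pos
  have h2 : Tendsto (fun x : ℝ => Real.log x ^ 2 / Real.sqrt x) atTop (𝓝 0) := by
    have := key 2 (1/2) (by norm_num)
    simp only [← Real.sqrt_eq_rpow] at this
    exact_mod_cast this
  have h3 : Tendsto (fun x : ℝ => Real.log x ^ 2 / x) atTop (𝓝 0) := by
    have := key 2 1 (by norm_num)
    simp only [Real.rpow_one] at this
    exact_mod_cast this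
  have h4 : Tendsto (fun x : ℝ => (Real.sqrt (Real.log x))⁻¹) atTop (𝓝 0) :=
    tendsto_inv_atTop_zero.comp (Real.tendsto_sqrt_atTop.comp Real.tendsto_log_atTop)
  have := (((h1.add (h4.const_mul B)).add (h2.const_mul 2)).add h3).comp tendsto_natCast_atTop_atTop
  simp only [mul_zero, add_zero] at this
  exact this

lemma cnt_lower {q : ℕ} [NeZero q] {a : ZMod q} (ha : IsUnit a) {ε : ℝ} (hε : 0 < ε) :
    ∃ N0 : ℕ, ∀ N ≥ N0, (N : ℝ) / q.totient / Real.log N - ε * N / (Real.log N) ^ 2 ≤ cnt a N := by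
  obtain ⟨C, hC, h⟩ := taub ha
  set A : ℝ := 2 / ε with hA
  have hA0 : 0 < A := by positivity
  have ev1 := (err_tendsto (C * Real.sqrt A)).eventually (Iio_mem_nhds (show 0 < ε / 2 by positivity))
  have ev2 : ∀ᶠ N : ℕ in atTop, 2 / A ≤ Real.log N :=
    (Real.tendsto_log_atTop.comp tendsto_natCast_atTop_atTop).eventually_ge_atTop _
  obtain ⟨N0, hN0⟩ := eventually_atTop.1 ((ev1.and ev2).and (eventually_ge_atTop 2))
  refine ⟨N0, fun N hN => ?_⟩
  obtain ⟨⟨e1, e2⟩, hN2⟩ := hN0 N hN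
  have hNp : (0:ℝ) < N := by positivity
  set L := Real.log N with hL
  have hL0 : 0 < L := Real.log_pos (by exact_mod_cast hN2)
  have hK : 2 ≤ A * L := by
    rw [div_le_iff₀ hA0] at e2; linarith
  have t1 := h (A * L) N hK hN2
  have t2 := sum_le_cnt a hN2
  rw [← hL] at t1 t2
  have hφ0 : 0 < (q.totient : ℝ) := by exact_mod_cast Nat.totient_pos.2 (Nat.pos_of_ne_zero (NeZero.ne q))
  have hφ1 : (q.totient : ℝ)⁻¹ ≤ 1 := inv_le_one_of_one_le₀ (by
    exact_mod_cast Nat.totient_pos.2 (Nat.pos_of_ne_zero (NeZero.ne q)))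
  set φ : ℝ := (q.totient : ℝ) with hφ
  -- combine
  have t3 : φ⁻¹ * (1 - 1 / (A * L) - 1 / N) - C * Real.sqrt (A * L) / L ^ 2 ≤
      (cnt a N * L + L + 2 * Real.sqrt N * L) / N := t1.trans (by gcongr)
  set s := Real.sqrt L with hs
  have hs0 : 0 < s := Real.sqrt_pos.2 hL0
  have hss : s * s = L := Real.mul_self_sqrt hL0.le
  set r := Real.sqrt N with hr
  have hr0 : 0 < r := Real.sqrt_pos.2 hNp
  have hrr : r * r = N := Real.mul_self_sqrt hNp.le
  rw [Real.sqrt_mul hA0.le] at t3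
  have t4 : φ⁻¹ - (ε / 2) / L - 1 / N - (C * Real.sqrt A) * s⁻¹ / L ≤
      cnt a N * L / N + L / N + 2 * (L / r) := by
    have b1 : φ⁻¹ * (1 - 1 / (A * L) - 1 / N) ≥ φ⁻¹ - 1 / (A * L) - 1 / N := by
      have p1 : 0 ≤ 1 / (A * L) + 1 / (N:ℝ) := by positivity
      nlinarith
    have b2 : 1 / (A * L) = (ε / 2) / L := by rw [hA]; field_simp
    have b3 : C * (Real.sqrt A * Real.sqrt L) / L ^ 2 = (C * Real.sqrt A) * s⁻¹ / L := by
      rw [← hs, ← hss]; field_simp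
    have b4 : (cnt a N * L + L + 2 * Real.sqrt N * L) / N = cnt a N * L / N + L / N + 2 * (L / r) := by
      rw [← hr, ← hrr]; field_simp
    linarith
  have t5 : φ⁻¹ * L - ε ≤ cnt a N * L ^ 2 / N := by
    have : (φ⁻¹ - (ε / 2) / L - 1 / N - (C * Real.sqrt A) * s⁻¹ / L) * L ≤
      (cnt a N * L / N + L / N + 2 * (L / r)) * L := by gcongr
    have c1 : (φ⁻¹ - (ε / 2) / L - 1 / N - (C * Real.sqrt A) * s⁻¹ / L) * L =
      φ⁻¹ * L - ε / 2 - L / N - C * Real.sqrt A * s⁻¹ := by field_simp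
    have c2 : (cnt a N * L / N + L / N + 2 * (L / r)) * L = cnt a N * L ^ 2 / N + L ^ 2 / N + 2 * (L ^ 2 / r) := by
      ring
    rw [c1, c2] at this
    have e1' : L / N + C * Real.sqrt A * s⁻¹ + 2 * (L ^ 2 / r) + L ^ 2 / N < ε / 2 := e1
    linarith
  have e : (N : ℝ) / φ / L - ε * N / L ^ 2 = (φ⁻¹ * L - ε) * (N / L ^ 2) := by
    field_simp
  rw [e]
  calc _ ≤ cnt a N * L ^ 2 / N * (N / L ^ 2) := by gcongr
    _ = cnt a N := by field_simp

lemma cnt_lower_unif (q : ℕ) [NeZero q] {ε : ℝ} (hε : 0 < ε) :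
    ∃ N0 : ℕ, ∀ a : ZMod q, IsUnit a → ∀ N ≥ N0,
      (N : ℝ) / q.totient / Real.log N - ε * N / (Real.log N) ^ 2 ≤ cnt a N := by
  have : ∀ a : (ZMod q)ˣ, ∃ N0 : ℕ, ∀ N ≥ N0, (N : ℝ) / q.totient / Real.log N - ε * N / (Real.log N) ^ 2 ≤ cnt (a : ZMod q) N :=
    fun a => cnt_lower a.isUnit hε
  choose N0 h using this
  refine ⟨Finset.univ.sup N0, fun a ha N hN => ?_⟩
  exact h ha.unit N (le_trans (Finset.le_sup (f := N0) (Finset.mem_univ ha.unit)) hN)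

end PNTAP

namespace PNTAP
open Filter Topology

def VV (a : ℕ) : Finset ℕ := (Finset.range a).filter (fun v => a.Coprime v)

lemma VV_sum {a : ℕ} (ha : 3 ≤ a) : (∑ v ∈ VV a, (v : ℝ)) = a * a.totient / 2 := by
  have h1 : ∑ v ∈ VV a, (v : ℝ) = ∑ v ∈ VV a, ((a : ℝ) - v) := by
    refine Finset.sum_nbij' (fun v => a - v) (fun v => a - v) ?_ ?_ ?_ ?_ ?_
    all_goals
      intro v hv
      simp only [VV, Finset.mem_filter, Finset.mem_range] at hv ⊢
      have hv0 : v ≠ 0 := by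
        rintro rfl
        have := (Nat.coprime_zero_right a).1 hv.2
        omega
    · exact ⟨by omega, (Nat.coprime_self_sub_right hv.1.le).2 hv.2⟩
    · exact ⟨by omega, (Nat.coprime_self_sub_right hv.1.le).2 hv.2⟩
    · omega
    · omega
    · rw [Nat.cast_sub hv.1.le]; ring
  rw [Finset.sum_sub_distrib, Finset.sum_const, nsmul_eq_mul] at h1
  have h2 : (VV a).card = a.totient := rfl
  rw [h2] at h1
  linarith

lemma rep_of_large {a b p : ℕ} (ha : 0 < a) (hab : a.Coprime b) (hp : a * b ≤ p) :
    ∃ u v : ℕ, p = a * u + b * v := by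
  have : NeZero a := ⟨ha.ne'⟩
  set u := ZMod.unitOfCoprime b hab.symm
  set v := ((p : ZMod a) * ((u⁻¹ : (ZMod a)ˣ) : ZMod a)).val with hv
  have hva : v < a := ZMod.val_lt _
  have hle : b * v ≤ p := by nlinarith
  have hc : ((b * v : ℕ) : ZMod a) = (p : ZMod a) := by
    push_cast
    rw [hv, ZMod.natCast_zmod_val, mul_left_comm]
    have : (b : ZMod a) = (u : ZMod a) := (ZMod.coe_unitOfCoprime b hab.symm).symm
    rw [this, Units.mul_inv, mul_one]
  have := (ZMod.natCast_eq_natCast_iff _ _ _).1 hc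
  obtain ⟨k, hk⟩ := (Nat.modEq_iff_dvd' hle).1 this
  exact ⟨k, v, by omega⟩

lemma cong_cancel {a b v v' : ℕ} (hab : a.Coprime b)
    (h : ((b * v : ℕ) : ZMod a) = ((b * v' : ℕ) : ZMod a)) : v ≡ v' [MOD a] :=
  Nat.ModEq.cancel_left_of_coprime hab ((ZMod.natCast_eq_natCast_iff _ _ _).1 h)

lemma cnt_le_piStar {a b : ℕ} (ha : 0 < a) (hab : a.Coprime b) :
    ∑ v ∈ VV a, cnt ((b * v : ℕ) : ZMod a) (b * v) ≤ piStar a b := by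
  classical
  have hfin : {p : ℕ | p.Prime ∧ ¬ ∃ u v : ℕ, p = a * u + b * v}.Finite := by
    refine (Set.finite_lt_nat (a * b)).subset fun p hp => ?_
    by_contra h
    exact hp.2 (rep_of_large ha hab (not_lt.1 h))
  unfold cnt
  rw [← Finset.card_biUnion, piStar, ← Set.ncard_coe_finset]
  · refine Set.ncard_le_ncard ?_ hfin
    intro p hp
    simp only [Finset.coe_biUnion, Set.mem_iUnion, Finset.mem_coe, Finset.mem_filter,
      Finset.mem_range] at hp
    obtain ⟨v, hv, hlt, hpr, hc⟩ := hp
    refine ⟨hpr, ?_⟩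
    rintro ⟨u, v', rfl⟩
    have hv' : v < a := Finset.mem_range.1 (Finset.mem_filter.1 hv).1
    have h1 : ((b * v' : ℕ) : ZMod a) = ((b * v : ℕ) : ZMod a) := by
      rw [← hc]; push_cast; simp
    have h2 := cong_cancel hab h1
    have h3 : v ≤ v' := by
      have : v' % a = v := by rw [h2, Nat.mod_eq_of_lt hv']
      rw [← this]; exact Nat.mod_le _ _
    have : b * v ≤ b * v' := Nat.mul_le_mul_left _ h3
    omega
  · intro v hv v' hv' hne
    rw [Function.onFun, Finset.disjoint_left]
    intro p hp hp'
    simp only [Finset.mem_filter] at hp hp'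
    apply hne
    have h2 := cong_cancel hab (hp.2.2.symm.trans hp'.2.2)
    have h3 : v < a := Finset.mem_range.1 (Finset.mem_filter.1 hv).1
    have h4 : v' < a := Finset.mem_range.1 (Finset.mem_filter.1 hv').1
    exact Nat.ModEq.eq_of_lt_of_lt h2 h3 h4

lemma rhs_le {a b : ℕ} (ha : 3 ≤ a) (hb : a + 3 ≤ b) :
    ((1 : ℝ) / 2 + 1 / (2 * ((a : ℝ) - 1))) * (S a b : ℝ) / Real.log (S a b) ≤
      (a * b / 2) / Real.log ((a - 1) * b) := by
  have ha' : (3:ℝ) ≤ a := by exact_mod_cast ha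
  have hb' : (a:ℝ) + 3 ≤ b := by exact_mod_cast hb
  have hle : a + b ≤ a * b := by nlinarith
  have hS : (S a b : ℝ) = a * b - a - b := by
    rw [S, Nat.sub_sub, Nat.cast_sub hle]; push_cast; ring
  have h3 : (3:ℝ) ≤ S a b := by rw [hS]; nlinarith
  have hM : (S a b : ℝ) ≤ (a - 1) * b := by rw [hS]; linarith
  set s : ℝ := (S a b : ℝ)
  set M : ℝ := ((a:ℝ) - 1) * b with hMd
  have he : Real.exp 1 ≤ 3 := by linarith [Real.exp_one_lt_d9]
  have key := Real.log_div_self_antitoneOn (show s ∈ Set.Ici (Real.exp 1) from he.trans h3)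
    (show M ∈ Set.Ici (Real.exp 1) from he.trans (h3.trans hM)) hM
  have hls : 0 < Real.log s := Real.log_pos (by linarith)
  have hlM : 0 < Real.log M := Real.log_pos (by linarith)
  have key2 : s / Real.log s ≤ M / Real.log M := by
    beta_reduce at key
    rw [div_le_div_iff₀ (by linarith) (by linarith)] at key
    rw [div_le_div_iff₀ hls hlM]
    linarith
  have hc : (1 : ℝ) / 2 + 1 / (2 * ((a : ℝ) - 1)) = a / (2 * (a - 1)) := by
    have : (a:ℝ) - 1 ≠ 0 := by linarith
    field_simp
    ring
  have hpos : 0 ≤ (a:ℝ) / (2 * (a - 1)) := div_nonneg (by linarith) (by linarith)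
  rw [hc, mul_div_assoc]
  calc _ ≤ (a:ℝ) / (2 * (a - 1)) * (M / Real.log M) := by gcongr
    _ = _ := by
      have : (a:ℝ) - 1 ≠ 0 := by linarith
      rw [hMd]
      field_simp

end PNTAP

open PNTAP

theorem number_of_primes_not_in_semigroup_lower_bound :
    ∀ a : ℕ, 3 ≤ a → ∃ C : ℕ, ∀ b : ℕ, C ≤ b → Nat.Coprime a b →
      ((1 : ℝ) / 2 + 1 / (2 * ((a : ℝ) - 1))) * (S a b : ℝ) / Real.log (S a b)
        < (piStar a b : ℝ) := by
  intro a ha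
  have : NeZero a := ⟨by omega⟩
  have ha' : (3:ℝ) ≤ a := by exact_mod_cast ha
  have hφ0 : 0 < (a.totient : ℝ) := by exact_mod_cast Nat.totient_pos.2 (by omega)
  set φ : ℝ := (a.totient : ℝ) with hφ
  set ℓ : ℝ := Real.log (a - 1) with hℓ
  have hℓ0 : 0 < ℓ := Real.log_pos (by linarith)
  set ε : ℝ := ℓ / (2 * φ * (a * φ)) with hε
  have hε0 : 0 < ε := by positivity
  obtain ⟨N0, hN0⟩ := cnt_lower_unif a hε0
  obtain ⟨B, hB⟩ := Filter.eventually_atTop.1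
    ((Real.tendsto_log_atTop.comp tendsto_natCast_atTop_atTop).eventually_ge_atTop ℓ)
  refine ⟨max (max N0 B) (a + 3), fun b hb hab => ?_⟩
  have hb1 : N0 ≤ b := le_trans (le_trans (le_max_left _ _) (le_max_left _ _)) hb
  have hb2 : B ≤ b := le_trans (le_trans (le_max_right _ _) (le_max_left _ _)) hb
  have hb3 : a + 3 ≤ b := le_trans (le_max_right _ _) hb
  have hbpos : (0:ℝ) < b := by exact_mod_cast (by omega : 0 < b)
  refine (rhs_le ha hb3).trans_lt ?_
  have hpi : (∑ v ∈ VV a, (cnt ((b * v : ℕ) : ZMod a) (b * v) : ℝ)) ≤ piStar a b := by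
    exact_mod_cast cnt_le_piStar (by omega) hab
  refine lt_of_lt_of_le ?_ hpi
  set L := Real.log b with hL
  have hLℓ : ℓ ≤ L := hB b hb2
  have hL0 : 0 < L := hℓ0.trans_le hLℓ
  have hH : Real.log (((a:ℝ) - 1) * b) = ℓ + L := Real.log_mul (by linarith) hbpos.ne'
  rw [hH]
  have h1V : 1 ∈ VV a := by simp [VV]; omega
  have hvb : ∀ v ∈ VV a, 1 ≤ v ∧ v ≤ a - 1 := by
    intro v hv
    simp only [VV, Finset.mem_filter, Finset.mem_range] at hv
    have hv0 : v ≠ 0 := by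
      rintro rfl
      have := (Nat.coprime_zero_right a).1 hv.2
      omega
    omega
  -- termwise lower bound
  have hterm : ∀ v ∈ VV a, (b * v : ℝ) / φ / (ℓ + L) - ε * (b * v) / L ^ 2 +
      (if v = 1 then (b : ℝ) / φ * (1 / L - 1 / (ℓ + L)) else 0) ≤
      (cnt ((b * v : ℕ) : ZMod a) (b * v) : ℝ) := by
    intro v hv
    obtain ⟨v1, v2⟩ := hvb v hv
    have hu : IsUnit ((b * v : ℕ) : ZMod a) := by
      rw [ZMod.isUnit_iff_coprime]
      exact (Nat.Coprime.mul_right hab (Finset.mem_filter.1 hv).2).symm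
    have h := hN0 _ hu (b * v) (hb1.trans (Nat.le_mul_of_pos_right _ v1))
    refine le_trans ?_ h
    have hvR : (1:ℝ) ≤ v := by exact_mod_cast v1
    have hvR2 : (v:ℝ) ≤ a - 1 := by
      have : ((v:ℕ):ℝ) ≤ ((a - 1 : ℕ) : ℝ) := by exact_mod_cast v2
      rwa [Nat.cast_sub (by omega), Nat.cast_one] at this
    have hlog : Real.log ((b * v : ℕ) : ℝ) = Real.log v + L := by
      push_cast
      rw [Real.log_mul hbpos.ne' (by linarith), add_comm]
    have hlv : 0 ≤ Real.log v := Real.log_nonneg hvR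
    have hlv2 : Real.log v ≤ ℓ := Real.log_le_log (by linarith) hvR2
    rw [hlog]
    push_cast
    have q1 : ε * (b * v : ℝ) / (Real.log v + L) ^ 2 ≤ ε * (b * v) / L ^ 2 := by
      gcongr; linarith
    have q2 : (b * v : ℝ) / φ / (ℓ + L) + (if v = 1 then (b : ℝ) / φ * (1 / L - 1 / (ℓ + L)) else 0) ≤
        (b * v : ℝ) / φ / (Real.log v + L) := by
      split_ifs with hv1
      · subst hv1
        simp only [Nat.cast_one, Real.log_one, zero_add, mul_one]
        apply le_of_eq
        ring
      · rw [add_zero]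
        gcongr
    linarith
  refine lt_of_lt_of_le ?_ (Finset.sum_le_sum hterm)
  rw [Finset.sum_add_distrib, Finset.sum_sub_distrib, Finset.sum_ite_eq', if_pos h1V]
  have s1 : ∑ v ∈ VV a, (b * v : ℝ) / φ / (ℓ + L) = (a * b / 2) / (ℓ + L) := by
    rw [← Finset.sum_div, ← Finset.sum_div, ← Finset.mul_sum, VV_sum ha, ← hφ]
    field_simp
  have s2 : ∑ v ∈ VV a, ε * (b * v : ℝ) / L ^ 2 = b / φ * (ℓ / 4) / L ^ 2 := by
    rw [← Finset.sum_div, ← Finset.mul_sum, ← Finset.mul_sum, VV_sum ha, ← hφ, hε]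
    field_simp
    norm_num
  rw [s1, s2]
  have s3 : b / φ * (ℓ / 4) / L ^ 2 < (b : ℝ) / φ * (1 / L - 1 / (ℓ + L)) := by
    have : 1 / L - 1 / (ℓ + L) = ℓ / (L * (ℓ + L)) := by
      have : ℓ + L ≠ 0 := by positivity
      field_simp
      ring
    rw [this, mul_div_assoc]
    apply mul_lt_mul_of_pos_left _ (by positivity)
    rw [div_lt_div_iff₀ (by positivity) (by positivity)]
    have : L * (ℓ + L) < 4 * L ^ 2 := by nlinarith
    nlinarith
  linarith
end

section
/- For every integer a ≥ 3 and every real ε > 0 there exists B such that for every integer b ≥ B with gcd(a,b) = 1, the number π*(a,b) of primes not representable as au + bv with u, v nonnegative integers satisfies π*(a,b) ≤ (1/2 + 1/(2(a−1)) + ε) · S(a,b)/log S(a,b); in other words, the factor 1/2 + 1/(2(a−1)) in the lower bound π*(a,b) > (1/2 + 1/(2(a−1)))·S(a,b)/log S(a,b) is best possible. -/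
open MeasureTheory Filter Topology

noncomputable def k0 (y : ℝ) : ℝ := ∫ t in (0:ℝ)..1, 2 * (1 - t) * Real.cos (t * y)

lemma k0_cont : Continuous k0 := by
  unfold k0
  apply intervalIntegral.continuous_parametric_intervalIntegral_of_continuous'
  fun_prop

lemma k0_eq (y : ℝ) (hy : y ≠ 0) : k0 y = 2 * (1 - Real.cos y) / y ^ 2 := by
  unfold k0
  rw [intervalIntegral.integral_eq_sub_of_hasDerivAt
    (f := fun t => 2 * ((1 - t) * Real.sin (t * y) / y - Real.cos (t * y) / y ^ 2))]
  · simp; field_simp; ring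
  · intro t _
    have h1 : HasDerivAt (fun t : ℝ => t * y) y t := by
      simpa using (hasDerivAt_id t).mul_const y
    have h2 := h1.sin
    have h3 := h1.cos
    have h4 : HasDerivAt (fun t : ℝ => 1 - t) (-1) t := by
      simpa using (hasDerivAt_id t).const_sub 1
    convert! (((h4.mul h2).div_const y).sub (h3.div_const (y ^ 2))).const_mul 2 using 1
    field_simp; ring
  · apply Continuous.intervalIntegrable; fun_prop

lemma k0_zero : k0 0 = 1 := by
  unfold k0
  rw [intervalIntegral.integral_eq_sub_of_hasDerivAt
    (f := fun t => 2 * t - t ^ 2)]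
  · norm_num
  · intro t _
    convert! ((hasDerivAt_id t).const_mul 2).sub (hasDerivAt_pow 2 t) using 1
    simp; ring
  · apply Continuous.intervalIntegrable; fun_prop

lemma k0_nonneg (y : ℝ) : 0 ≤ k0 y := by
  by_cases hy : y = 0
  · rw [hy, k0_zero]; norm_num
  · rw [k0_eq y hy]
    have := Real.cos_le_one y
    apply div_nonneg _ (sq_nonneg _); linarith

lemma k0_le_two (y : ℝ) : k0 y ≤ 2 := by
  have := intervalIntegral.norm_integral_le_of_norm_le_const (a := 0) (b := 1) (C := 2)
    (f := fun t : ℝ => 2 * (1 - t) * Real.cos (t * y)) (by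
      intro t ht
      rw [Set.uIoc_of_le zero_le_one] at ht
      rw [norm_mul, norm_mul]
      have h1 : ‖(1 - t)‖ ≤ 1 := by
        rw [Real.norm_eq_abs, abs_le]; constructor <;> linarith [ht.1, ht.2]
      have h2 : ‖Real.cos (t * y)‖ ≤ 1 := Real.abs_cos_le_one _
      have h3 : ‖(2:ℝ)‖ = 2 := by norm_num
      rw [h3]
      nlinarith [norm_nonneg (1 - t), norm_nonneg (Real.cos (t * y))])
  have h2 := (le_abs_self _).trans this
  simpa [k0] using h2

lemma k0_bound (y : ℝ) : k0 y ≤ 8 * (1 + y ^ 2)⁻¹ := by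
  have hp : 0 < 1 + y ^ 2 := by positivity
  rw [← div_eq_mul_inv, le_div_iff₀ hp]
  by_cases h : y ^ 2 ≤ 1
  · nlinarith [k0_le_two y, k0_nonneg y]
  · push Not at h
    have hy : y ≠ 0 := by rintro rfl; norm_num at h
    have h1 : k0 y * y ^ 2 ≤ 4 := by
      rw [k0_eq y hy, div_mul_cancel₀ _ (by positivity)]
      linarith [Real.neg_one_le_cos y]
    nlinarith [k0_le_two y, k0_nonneg y]

lemma k0_int : Integrable k0 := by
  refine Integrable.mono' (integrable_inv_one_add_sq.const_mul 8)
    k0_cont.aestronglyMeasurable (Eventually.of_forall fun y => ?_)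
  rw [Real.norm_eq_abs, abs_of_nonneg (k0_nonneg y)]
  exact k0_bound y

lemma k0_pos : 0 < ∫ y, k0 y := by
  apply integral_pos_of_integrable_nonneg_nonzero (x := 0) k0_cont k0_int k0_nonneg
  rw [k0_zero]; norm_num

lemma k0_fourier (y : ℝ) :
    ∫ t in (-1:ℝ)..1, ((1 - |t| : ℝ) : ℂ) * Complex.exp (-Complex.I * t * y) = (k0 y : ℂ) := by
  have hc : Continuous fun t : ℝ => ((1 - |t| : ℝ) : ℂ) * Complex.exp (-Complex.I * t * y) := by
    fun_prop
  rw [← intervalIntegral.integral_add_adjacent_intervals (b := 0)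
    (hc.intervalIntegrable _ _) (hc.intervalIntegrable _ _)]
  have h1 := intervalIntegral.integral_comp_neg (a := 0) (b := 1)
    (fun t : ℝ => ((1 - |t| : ℝ) : ℂ) * Complex.exp (-Complex.I * t * y))
  rw [neg_zero] at h1
  rw [← h1, ← intervalIntegral.integral_add]
  · unfold k0
    rw [← intervalIntegral.integral_ofReal]
    apply intervalIntegral.integral_congr
    intro t ht
    rw [Set.uIcc_of_le zero_le_one] at ht
    simp only [abs_neg, abs_of_nonneg ht.1]
    push_cast
    rw [Complex.cos]
    have e1 : -Complex.I * -(t:ℂ) * y = t * y * Complex.I := by ring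
    have e2 : -Complex.I * (t:ℂ) * y = -(t * y) * Complex.I := by ring
    rw [e1, e2]; ring
  · apply Continuous.intervalIntegrable; fun_prop
  · exact hc.intervalIntegrable _ _

lemma kernel_exists (η δ : ℝ) (hη : 0 < η) (hδ : 0 < δ) :
    ∃ (T : ℝ) (g k : ℝ → ℝ), 0 < T ∧ Continuous g ∧ Continuous k ∧ (∀ y, 0 ≤ k y) ∧
      Integrable k ∧ ∫ y, k y = 1 ∧
      (∀ y : ℝ, ∫ t in (-T)..T, (g t : ℂ) * Complex.exp (-Complex.I * t * y) = (k y : ℂ)) ∧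
      1 - δ ≤ ∫ y in (-η)..η, k y := by
  obtain ⟨J, hJ⟩ : ∃ J, J = ∫ y, k0 y := ⟨_, rfl⟩
  have hJp : 0 < J := hJ ▸ k0_pos
  have hlim : Tendsto (fun T : ℝ => ∫ y in (-(T * η))..(T * η), k0 y) atTop (𝓝 J) := by
    rw [hJ]
    apply intervalIntegral_tendsto_integral k0_int
    · exact tendsto_neg_atTop_atBot.comp (tendsto_id.atTop_mul_const hη)
    · exact tendsto_id.atTop_mul_const hη
  have hev : ∀ᶠ T : ℝ in atTop, (1 - δ) * J < ∫ y in (-(T * η))..(T * η), k0 y := by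
    apply hlim.eventually_const_lt
    nlinarith
  obtain ⟨T, hT1, hT⟩ := (hev.and (eventually_gt_atTop 0)).exists
  refine ⟨T, fun t => (1 - |t / T|) / J, fun y => T * k0 (T * y) / J, hT, by fun_prop, ?_, ?_,
    ?_, ?_, ?_, ?_⟩
  · have := k0_cont; fun_prop
  · intro y; have := k0_nonneg (T * y); positivity
  · exact ((k0_int.comp_mul_left' hT.ne').const_mul T).div_const J
  · have h1 : ∫ y, k0 (T * y) = |T⁻¹| • J := hJ ▸ Measure.integral_comp_mul_left k0 T
    rw [abs_of_pos (inv_pos.mpr hT), smul_eq_mul] at h1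
    have h2 : ∫ y, T * k0 (T * y) / J = T * (∫ y, k0 (T * y)) / J := by
      rw [integral_div, integral_const_mul]
    rw [h2, h1, mul_inv_cancel_left₀ hT.ne', div_self hJp.ne']
  · intro y
    have := k0_fourier (T * y)
    have h2 := intervalIntegral.integral_comp_div (a := -T) (b := T) (c := T)
      (fun t : ℝ => ((1 - |t| : ℝ) : ℂ) * Complex.exp (-Complex.I * t * (T * y : ℝ))) hT.ne'
    rw [neg_div, div_self hT.ne', this] at h2
    have hTC : (T : ℂ) ≠ 0 := by exact_mod_cast hT.ne'
    have hJC : (J : ℂ) ≠ 0 := by exact_mod_cast hJp.ne'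
    have h3 : ((T * k0 (T * y) / J : ℝ) : ℂ) = (T • (k0 (T * y) : ℂ)) * (J:ℂ)⁻¹ := by
      push_cast; rw [Complex.real_smul, div_eq_mul_inv]
    rw [h3, ← h2, ← intervalIntegral.integral_mul_const]
    apply intervalIntegral.integral_congr
    intro t _
    simp only
    have e : -Complex.I * ((t / T : ℝ) : ℂ) * ((T * y : ℝ) : ℂ) = -Complex.I * t * y := by
      push_cast; field_simp
    rw [e]; push_cast; ring
  · rw [intervalIntegral.integral_div, intervalIntegral.integral_const_mul,
      intervalIntegral.integral_comp_mul_left _ hT.ne', smul_eq_mul, mul_inv_cancel_left₀ hT.ne',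
      le_div_iff₀ hJp, mul_neg]
    exact hT1.le

section smooth
variable {f : ℕ → ℝ} {T : ℝ} {g k : ℝ → ℝ}

lemma term_exp (f : ℕ → ℝ) (hf0 : f 0 = 0) (s : ℂ) (n : ℕ) :
    LSeries.term (fun n => (f n : ℂ)) s n = f n * Complex.exp (-s * Real.log n) := by
  rcases eq_or_ne n 0 with rfl | hn
  · simp [hf0]
  · rw [LSeries.term_of_ne_zero hn, Complex.cpow_def_of_ne_zero (by exact_mod_cast hn),
      div_eq_mul_inv, ← Complex.exp_neg, ← Complex.natCast_log]
    congr 2; ring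

lemma step_sum (hf0 : f 0 = 0)
    (hsum : ∀ σ : ℝ, 1 < σ → LSeriesSummable (fun n => (f n : ℂ)) σ)
    (hT : 0 < T) (hg : Continuous g)
    (hgk : ∀ y : ℝ, ∫ t in (-T)..T, (g t : ℂ) * Complex.exp (-Complex.I * t * y) = (k y : ℂ))
    (σ : ℝ) (hσ : 1 < σ) (y : ℝ) :
    HasSum (fun n => ((f n * Real.exp (-σ * Real.log n) * k (Real.log n - y) : ℝ) : ℂ))
      (∫ t in (-T)..T, LSeries (fun n => (f n : ℂ)) (σ + t * Complex.I) *
        (g t * Complex.exp (Complex.I * t * y))) := by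
  have key := intervalIntegral.hasSum_integral_of_dominated_convergence (μ := volume)
    (a := -T) (b := T)
    (F := fun n t => LSeries.term (fun n => (f n : ℂ)) (σ + t * Complex.I) n *
        (g t * Complex.exp (Complex.I * t * y)))
    (f := fun t => LSeries (fun n => (f n : ℂ)) (σ + t * Complex.I) *
        (g t * Complex.exp (Complex.I * t * y)))
    (fun n t => ‖LSeries.term (fun n => (f n : ℂ)) σ n‖ * |g t|) ?_ ?_ ?_ ?_ ?_
  · convert! key using 2 with n
    rw [Complex.ofReal_mul, ← hgk, ← intervalIntegral.integral_const_mul]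
    apply intervalIntegral.integral_congr
    intro t _
    simp only
    rw [term_exp f hf0]
    generalize Real.log n = l
    push_cast
    have : -(σ + t * Complex.I) * (l : ℂ) = -σ * l + -(Complex.I * t * l) := by
      ring
    rw [this, Complex.exp_add]
    have : -Complex.I * (t:ℂ) * ((l : ℂ) - y) = -(Complex.I * t * l) + Complex.I * t * y := by
      ring
    rw [this, Complex.exp_add]
    ring
  · intro n
    apply Continuous.aestronglyMeasurable
    simp_rw [term_exp f hf0]
    fun_prop
  · intro n
    refine Eventually.of_forall fun t _ => ?_
    rw [term_exp f hf0, term_exp f hf0]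
    generalize Real.log n = l
    simp only [norm_mul, Complex.norm_exp, Complex.norm_real]
    simp
  · refine Eventually.of_forall fun t _ => ?_
    exact (hsum σ hσ).norm.mul_right _
  · apply Continuous.intervalIntegrable
    simp_rw [tsum_mul_right]
    fun_prop
  · refine Eventually.of_forall fun t _ => ?_
    apply HasSum.mul_right
    have : LSeriesSummable (fun n => (f n : ℂ)) (σ + t * Complex.I) :=
      (LSeriesSummable_iff_of_re_eq_re (by simp)).mpr (hsum σ hσ)
    exact this.hasSum

lemma step_pole (hT : 0 < T) (hg : Continuous g) (hk : Continuous k) (hk0 : ∀ y, 0 ≤ k y)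
    (hki : Integrable k) (hk1 : ∫ y, k y = 1)
    (hgk : ∀ y : ℝ, ∫ t in (-T)..T, (g t : ℂ) * Complex.exp (-Complex.I * t * y) = (k y : ℂ))
    (c : ℝ) (hc : 0 < c) (y : ℝ) :
    (∫ t in (-T)..T, 1 / (c + t * Complex.I) *
        (g t * Complex.exp (Complex.I * t * y))).re ≤ 1 := by
  have e1 : ∀ t : ℝ, 1 / (c + t * Complex.I) * (g t * Complex.exp (Complex.I * t * y)) =
      ∫ u in Set.Ioi (0:ℝ), Complex.exp (-(c + t * Complex.I) * u) *
        (g t * Complex.exp (Complex.I * t * y)) := by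
    intro t
    rw [integral_mul_const, integral_exp_mul_complex_Ioi (by simpa using hc)]
    rw [Complex.ofReal_zero, mul_zero, Complex.exp_zero, neg_div_neg_eq]
  simp_rw [e1]
  rw [intervalIntegral.integral_of_le (by linarith), integral_integral_swap]
  · have e2 : ∀ u : ℝ, ∫ t in Set.Ioc (-T) T, Complex.exp (-(c + t * Complex.I) * u) *
        (g t * Complex.exp (Complex.I * t * y)) = ((Real.exp (-c * u) * k (u - y) : ℝ) : ℂ) := by
      intro u
      rw [← intervalIntegral.integral_of_le (by linarith), Complex.ofReal_mul, ← hgk,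
        ← intervalIntegral.integral_const_mul]
      apply intervalIntegral.integral_congr
      intro t _
      simp only
      push_cast
      have : -(c + t * Complex.I) * (u:ℂ) = -c * u + -(Complex.I * t * u) := by ring
      rw [this, Complex.exp_add]
      have : -Complex.I * (t:ℂ) * ((u : ℂ) - y) = -(Complex.I * t * u) + Complex.I * t * y := by
        ring
      rw [this, Complex.exp_add]
      ring
    simp_rw [e2]
    rw [integral_complex_ofReal, Complex.ofReal_re]
    have hki' : Integrable (fun u => k (u - y)) := hki.comp_sub_right y
    calc ∫ u in Set.Ioi (0:ℝ), Real.exp (-c * u) * k (u - y)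
        ≤ ∫ u in Set.Ioi (0:ℝ), k (u - y) := by
          apply integral_mono_of_nonneg
          · exact Eventually.of_forall fun u => mul_nonneg (Real.exp_pos _).le (hk0 _)
          · exact hki'.integrableOn
          · refine (ae_restrict_iff' measurableSet_Ioi).mpr (Eventually.of_forall fun u hu => ?_)
            have : Real.exp (-c * u) ≤ 1 := by
              rw [Real.exp_le_one_iff]; have : 0 < u := hu; nlinarith
            exact mul_le_of_le_one_left (hk0 _) this
      _ ≤ ∫ u, k (u - y) := setIntegral_le_integral hki' (Eventually.of_forall fun u => hk0 _)
      _ = 1 := by rw [integral_sub_right_eq_self (fun u => k u) y, hk1]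
  · have h1 : Integrable g (volume.restrict (Set.Ioc (-T) T)) :=
      (hg.continuousOn.integrableOn_Icc (a := -T) (b := T)).mono_set Set.Ioc_subset_Icc_self
    have h2 : Integrable (fun u => Real.exp (-c * u)) (volume.restrict (Set.Ioi (0:ℝ))) :=
      exp_neg_integrableOn_Ioi 0 hc
    refine (h1.mul_prod h2).mono ?_ (Eventually.of_forall fun p => ?_)
    · apply Continuous.aestronglyMeasurable
      unfold Function.uncurry
      fun_prop
    · simp only [Function.uncurry, norm_mul, Complex.norm_exp, Complex.norm_real]
      simp [mul_comm]

lemma smoothed {A : ℝ} {G : ℂ → ℂ} (hf : ∀ n, 0 ≤ f n) (hf0 : f 0 = 0)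
    (hsum : ∀ σ : ℝ, 1 < σ → LSeriesSummable (fun n => (f n : ℂ)) σ)
    (hA : 0 ≤ A) (hG : ContinuousOn G {s | 1 ≤ s.re})
    (hGf : ∀ s : ℂ, 1 < s.re → G s = LSeries (fun n => (f n : ℂ)) s - A / (s - 1))
    (hT : 0 < T) (hg : Continuous g) (hk : Continuous k) (hk0 : ∀ y, 0 ≤ k y)
    (hki : Integrable k) (hk1 : ∫ y, k y = 1)
    (hgk : ∀ y : ℝ, ∫ t in (-T)..T, (g t : ℂ) * Complex.exp (-Complex.I * t * y) = (k y : ℂ))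
    (y : ℝ) (N : ℕ) :
    ∑ n ∈ Finset.range N, f n * Real.exp (-Real.log n) * k (Real.log n - y) ≤
      A + (∫ t in (-T)..T, G (1 + t * Complex.I) *
        (g t * Complex.exp (Complex.I * t * y))).re := by
  have hcont : Continuous (fun p : ℝ × ℝ => G ((max p.1 1 : ℝ) + p.2 * Complex.I)) := by
    apply hG.comp_continuous
    · fun_prop
    · intro p; simp
  have hσ : ∀ σ : ℝ, 1 < σ →
      ∑ n ∈ Finset.range N, f n * Real.exp (-σ * Real.log n) * k (Real.log n - y) ≤
      A + (∫ t in (-T)..T, G ((max σ 1 : ℝ) + t * Complex.I) *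
        (g t * Complex.exp (Complex.I * t * y))).re := by
    intro σ hσ
    have h1 := Complex.hasSum_re (step_sum hf0 hsum hT hg hgk σ hσ y)
    simp only [Complex.ofReal_re] at h1
    have h2 := sum_le_hasSum (Finset.range N) (fun n _ =>
      mul_nonneg (mul_nonneg (hf n) (Real.exp_pos _).le) (hk0 _)) h1
    refine h2.trans ?_
    have h3 := step_pole hT hg hk hk0 hki hk1 hgk (σ - 1) (by linarith) y
    have hne : ∀ t : ℝ, ((σ - 1 : ℝ) : ℂ) + t * Complex.I ≠ 0 := by
      intro t h
      have := congrArg Complex.re h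
      simp at this; linarith
    have h4 : (∫ t in (-T)..T, LSeries (fun n => (f n : ℂ)) (σ + t * Complex.I) *
        (g t * Complex.exp (Complex.I * t * y))) =
        (∫ t in (-T)..T, G ((max σ 1 : ℝ) + t * Complex.I) *
        (g t * Complex.exp (Complex.I * t * y))) +
        A * (∫ t in (-T)..T, 1 / (((σ - 1 : ℝ) : ℂ) + t * Complex.I) *
        (g t * Complex.exp (Complex.I * t * y))) := by
      rw [← intervalIntegral.integral_const_mul, ← intervalIntegral.integral_add]
      · apply intervalIntegral.integral_congr
        intro t _
        simp only
        rw [max_eq_left hσ.le, hGf _ (by simpa using hσ)]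
        push_cast
        rw [show (σ:ℂ) + t * Complex.I - 1 = σ - 1 + t * Complex.I by ring]
        ring
      · apply Continuous.intervalIntegrable
        have : Continuous (fun t : ℝ => G ((max σ 1 : ℝ) + t * Complex.I)) :=
          hcont.comp (Continuous.prodMk_right σ)
        exact this.mul (by fun_prop)
      · apply Continuous.intervalIntegrable
        apply Continuous.mul continuous_const
        apply Continuous.mul
        · exact Continuous.div continuous_const (by fun_prop) hne
        · fun_prop
    rw [h4, Complex.add_re, Complex.re_ofReal_mul]
    nlinarith
  have hL : Tendsto (fun σ : ℝ =>
      ∑ n ∈ Finset.range N, f n * Real.exp (-σ * Real.log n) * k (Real.log n - y)) (𝓝[>] 1)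
      (𝓝 (∑ n ∈ Finset.range N, f n * Real.exp (-1 * Real.log n) * k (Real.log n - y))) := by
    apply Tendsto.mono_left _ nhdsWithin_le_nhds
    apply Continuous.tendsto (f := fun σ : ℝ =>
      ∑ n ∈ Finset.range N, f n * Real.exp (-σ * Real.log n) * k (Real.log n - y))
    fun_prop
  have hR : Tendsto (fun σ : ℝ =>
      A + (∫ t in (-T)..T, G ((max σ 1 : ℝ) + t * Complex.I) *
        (g t * Complex.exp (Complex.I * t * y))).re) (𝓝[>] 1)
      (𝓝 (A + (∫ t in (-T)..T, G ((max 1 1 : ℝ) + t * Complex.I) *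
        (g t * Complex.exp (Complex.I * t * y))).re)) := by
    apply Tendsto.mono_left _ nhdsWithin_le_nhds
    apply Continuous.tendsto (f := fun σ : ℝ => A + (∫ t in (-T)..T, G ((max σ 1 : ℝ) + t * Complex.I) *
        (g t * Complex.exp (Complex.I * t * y))).re)
    apply Continuous.add continuous_const
    apply Complex.continuous_re.comp
    apply intervalIntegral.continuous_parametric_intervalIntegral_of_continuous'
      (f := fun (σ t : ℝ) => G ((max σ 1 : ℝ) + t * Complex.I) *
        (g t * Complex.exp (Complex.I * t * y)))
    exact hcont.mul (by fun_prop)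
  have := le_of_tendsto_of_tendsto hL hR (eventually_mem_nhdsWithin.mono hσ)
  simpa using this

end smooth

lemma RL (T : ℝ) (hT : 0 < T) (H : ℝ → ℂ) :
    Tendsto (fun y : ℝ => ∫ t in (-T)..T, H t * Complex.exp (Complex.I * t * y)) atTop (𝓝 0) := by
  have h1 := Real.tendsto_integral_exp_smul_cocompact ((Set.Ioc (-T) T).indicator H)
  have h2 : Tendsto (fun y : ℝ => -(y / (2 * Real.pi))) atTop (cocompact ℝ) := by
    refine Tendsto.mono_right ?_ atBot_le_cocompact
    exact tendsto_neg_atTop_atBot.comp (tendsto_id.atTop_div_const (by positivity))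
  refine (h1.comp h2).congr fun y => ?_
  simp only [Function.comp]
  rw [intervalIntegral.integral_of_le (by linarith), ← integral_indicator measurableSet_Ioc]
  congr 1
  ext t
  by_cases ht : t ∈ Set.Ioc (-T) T
  · rw [Set.indicator_of_mem ht, Set.indicator_of_mem ht, Circle.smul_def, Real.fourierChar_apply,
      smul_eq_mul, mul_comm]
    congr 2
    have : (Real.pi : ℂ) ≠ 0 := by exact_mod_cast Real.pi_ne_zero
    push_cast
    field_simp
  · rw [Set.indicator_of_notMem ht, Set.indicator_of_notMem ht, smul_zero]

lemma window {k : ℝ → ℝ} (hk : Continuous k) (hk0 : ∀ y, 0 ≤ k y) (e u l : ℝ) (he : 0 < e)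
    (hl0 : 0 ≤ l) (hlu : l ≤ u) (hw : 1 - e ≤ ∫ y in (-e)..e, k y) :
    Real.exp (l - e) * (1 - e) ≤ ∫ y in (-e)..(u + e), k (l - y) * Real.exp y := by
  have hc : Continuous fun y => k (l - y) * Real.exp y := by fun_prop
  calc Real.exp (l - e) * (1 - e) ≤ Real.exp (l - e) * ∫ y in (-e)..e, k y := by gcongr
    _ = ∫ y in (l - e)..(l + e), Real.exp (l - e) * k (l - y) := by
        rw [intervalIntegral.integral_const_mul, intervalIntegral.integral_comp_sub_left]
        congr 2 <;> ring
    _ ≤ ∫ y in (l - e)..(l + e), k (l - y) * Real.exp y := by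
        apply intervalIntegral.integral_mono_on (by linarith)
        · apply Continuous.intervalIntegrable; fun_prop
        · exact hc.intervalIntegrable _ _
        · intro y hy
          rw [mul_comm]
          apply mul_le_mul_of_nonneg_left _ (hk0 _)
          exact Real.exp_le_exp.mpr hy.1
    _ ≤ _ := by
        apply intervalIntegral.integral_mono_interval (by linarith) (by linarith) (by linarith)
        · exact Eventually.of_forall fun y => mul_nonneg (hk0 _) (Real.exp_pos _).le
        · exact hc.intervalIntegrable _ _

lemma WI_upper {f : ℕ → ℝ} {A : ℝ} {G : ℂ → ℂ} (hf : ∀ n, 0 ≤ f n) (hf0 : f 0 = 0)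
    (hsum : ∀ σ : ℝ, 1 < σ → LSeriesSummable (fun n => (f n : ℂ)) σ)
    (hA : 0 ≤ A) (hG : ContinuousOn G {s | 1 ≤ s.re})
    (hGf : ∀ s : ℂ, 1 < s.re → G s = LSeries (fun n => (f n : ℂ)) s - A / (s - 1))
    (ε : ℝ) (hε : 0 < ε) :
    ∀ᶠ x : ℝ in atTop, ∑ n ∈ Finset.range (⌊x⌋₊ + 1), f n ≤ (A + ε) * x := by
  obtain ⟨e, he, he1, heA⟩ : ∃ e : ℝ, 0 < e ∧ e < 1 ∧
      (A + e) * Real.exp (2 * e) / (1 - e) < A + ε / 2 := by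
    have hc : ContinuousAt (fun e : ℝ => (A + e) * Real.exp (2 * e) / (1 - e)) 0 := by
      apply ContinuousAt.div (by fun_prop) (by fun_prop) (by norm_num)
    have h0 : (fun e : ℝ => (A + e) * Real.exp (2 * e) / (1 - e)) 0 < A + ε / 2 := by
      simp; linarith
    have h1 := (hc.eventually_lt_const h0)
    have h2 : ∀ᶠ e : ℝ in 𝓝[>] 0, (A + e) * Real.exp (2 * e) / (1 - e) < A + ε / 2 :=
      h1.filter_mono nhdsWithin_le_nhds
    have h3 : ∀ᶠ e : ℝ in 𝓝[>] 0, e < 1 :=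
      (eventually_lt_nhds (by norm_num : (0:ℝ) < 1)).filter_mono nhdsWithin_le_nhds
    obtain ⟨e, ⟨h4, h5⟩, h6⟩ := ((h2.and h3).and eventually_mem_nhdsWithin).exists
    exact ⟨e, h6, h5, h4⟩
  obtain ⟨T, g, k, hT, hg, hk, hk0, hki, hk1, hgk, hw⟩ := kernel_exists e e he he
  have hsm := smoothed hf hf0 hsum hA hG hGf hT hg hk hk0 hki hk1 hgk
  have hcG : Continuous (fun t : ℝ => G (1 + t * Complex.I)) := by
    apply hG.comp_continuous (by fun_prop)
    intro t; simp
  have hR0 := RL T hT (fun t => G (1 + t * Complex.I) * g t)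
  simp only [mul_assoc (G _) _ _] at hR0
  obtain ⟨R, hR⟩ : ∃ R : ℝ → ℂ, R = fun y : ℝ => ∫ t in (-T)..T, G (1 + t * Complex.I) *
        (g t * Complex.exp (Complex.I * t * y)) := ⟨_, rfl⟩
  rw [← hR] at hR0
  obtain ⟨C, hC⟩ : ∃ C : ℝ, ∀ y, ‖R y‖ ≤ C := by
    refine ⟨∫ t in (-T)..T, ‖G (1 + t * Complex.I) * g t‖, fun y => ?_⟩
    rw [hR]
    refine (intervalIntegral.norm_integral_le_integral_norm (by linarith)).trans (le_of_eq ?_)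
    apply intervalIntegral.integral_congr
    intro t _
    simp [Complex.norm_exp]
  have hC0 : 0 ≤ C := (norm_nonneg _).trans (hC 0)
  obtain ⟨y0, hy0⟩ : ∃ y0, ∀ y ≥ y0, ‖R y‖ < e := by
    have := (tendsto_zero_iff_norm_tendsto_zero.mp hR0).eventually_lt_const he
    exact eventually_atTop.mp this
  have hPhi : ∀ (N : ℕ) (y : ℝ),
      ∑ n ∈ Finset.range N, f n * Real.exp (-Real.log n) * k (Real.log n - y) ≤
      A + e + C * Real.exp y0 * Real.exp (-y) := by
    intro N y
    refine (hsm y N).trans ?_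
    have h1 : (R y).re ≤ ‖R y‖ := Complex.re_le_norm _
    have h2 : ‖R y‖ ≤ e + C * Real.exp y0 * Real.exp (-y) := by
      rcases le_total y0 y with h | h
      · have := hy0 y h
        have : 0 ≤ C * Real.exp y0 * Real.exp (-y) := by positivity
        linarith
      · have h3 : 1 ≤ Real.exp y0 * Real.exp (-y) := by
          rw [← Real.exp_add, Real.one_le_exp_iff]; linarith
        have := hC y
        nlinarith
    rw [hR] at h1 h2
    linarith
  obtain ⟨D, hD⟩ : ∃ D, D = C * Real.exp y0 := ⟨_, rfl⟩
  rw [← hD] at hPhi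
  have hD0 : 0 ≤ D := by rw [hD]; positivity
  have main : ∀ x : ℝ, 1 ≤ x → (∑ n ∈ Finset.range (⌊x⌋₊ + 1), f n) * (Real.exp (-e) * (1 - e)) ≤
      (A + e) * (x * Real.exp e) + D * (Real.log x + 2 * e) := by
    intro x hx
    have hx0 : 0 < x := by linarith
    have hu : 0 ≤ Real.log x := Real.log_nonneg hx
    calc (∑ n ∈ Finset.range (⌊x⌋₊ + 1), f n) * (Real.exp (-e) * (1 - e))
        ≤ ∑ n ∈ Finset.range (⌊x⌋₊ + 1), f n * Real.exp (-Real.log n) *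
          ∫ y in (-e)..(Real.log x + e), k (Real.log n - y) * Real.exp y := by
          rw [Finset.sum_mul]
          apply Finset.sum_le_sum
          intro n hn
          rcases eq_or_ne n 0 with rfl | hn0
          · simp [hf0]
          have hn1 : (1:ℝ) ≤ n := by exact_mod_cast Nat.one_le_iff_ne_zero.mpr hn0
          have hnx : (n:ℝ) ≤ x := by
            have : n ≤ ⌊x⌋₊ := by simpa [Nat.lt_succ_iff] using hn
            exact (Nat.cast_le.mpr this).trans (Nat.floor_le hx0.le)
          have := window hk hk0 e (Real.log x) (Real.log n) he (Real.log_nonneg hn1)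
            (Real.log_le_log (by linarith) hnx) hw
          rw [mul_assoc]
          apply mul_le_mul_of_nonneg_left _ (hf n)
          calc Real.exp (-e) * (1 - e) =
              Real.exp (-Real.log n) * (Real.exp (Real.log n - e) * (1 - e)) := by
                rw [← mul_assoc, ← Real.exp_add]; congr 2; ring
            _ ≤ _ := by gcongr
      _ = ∫ y in (-e)..(Real.log x + e), ∑ n ∈ Finset.range (⌊x⌋₊ + 1),
            f n * Real.exp (-Real.log n) * (k (Real.log n - y) * Real.exp y) := by
          rw [intervalIntegral.integral_finsetSum]
          · simp_rw [intervalIntegral.integral_const_mul]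
          · intro n _
            apply Continuous.intervalIntegrable; fun_prop
      _ ≤ ∫ y in (-e)..(Real.log x + e), ((A + e) * Real.exp y + D) := by
          apply intervalIntegral.integral_mono_on (by linarith)
          · apply Continuous.intervalIntegrable; fun_prop
          · apply Continuous.intervalIntegrable; fun_prop
          · intro y _
            have h1 := mul_le_mul_of_nonneg_right (hPhi (⌊x⌋₊ + 1) y) (Real.exp_pos y).le
            have h2 : D * Real.exp (-y) * Real.exp y = D := by
              rw [mul_assoc, ← Real.exp_add]; simp
            rw [add_mul, h2, Finset.sum_mul] at h1
            simpa only [mul_assoc] using h1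
      _ = (A + e) * (Real.exp (Real.log x + e) - Real.exp (-e)) + D * (Real.log x + 2 * e) := by
          rw [intervalIntegral.integral_add (by apply Continuous.intervalIntegrable; fun_prop)
            (by simp), intervalIntegral.integral_const_mul, integral_exp,
            intervalIntegral.integral_const, smul_eq_mul]
          ring
      _ ≤ _ := by
          rw [Real.exp_add, Real.exp_log hx0]
          have : 0 ≤ (A + e) * Real.exp (-e) := by positivity
          linarith
  have hce : 0 < Real.exp (-e) * (1 - e) := mul_pos (Real.exp_pos _) (by linarith)
  have hlog : Tendsto (fun x : ℝ => D * (Real.log x + 2 * e) / x) atTop (𝓝 0) := by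
    have h1 : Tendsto (fun x : ℝ => Real.log x / x) atTop (𝓝 0) := by
      simpa using Real.isLittleO_log_id_atTop.tendsto_div_nhds_zero
    have h2 : Tendsto (fun x : ℝ => (2 * e) / x) atTop (𝓝 0) := tendsto_const_nhds.div_atTop tendsto_id
    have h3 := (h1.add h2).const_mul D
    simp only [add_zero, mul_zero] at h3
    refine h3.congr fun x => ?_
    ring
  have hev := hlog.eventually_lt_const (show 0 < ε / 2 * (Real.exp (-e) * (1 - e)) by positivity)
  filter_upwards [hev, eventually_ge_atTop 1] with x h1 h2
  have hx0 : 0 < x := by linarith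
  rw [div_lt_iff₀ hx0] at h1
  have h3 := main x h2
  rw [div_lt_iff₀ (by linarith)] at heA
  have h4 : (A + e) * Real.exp e ≤ (A + ε / 2) * (Real.exp (-e) * (1 - e)) := by
    have h5 : Real.exp e = Real.exp (2 * e) * Real.exp (-e) := by
      rw [← Real.exp_add]; congr 1; ring
    rw [h5]
    have := mul_le_mul_of_nonneg_right heA.le (Real.exp_pos (-e)).le
    linarith
  have h6 := mul_le_mul_of_nonneg_right h4 hx0.le
  refine le_of_mul_le_mul_right ?_ hce
  nlinarith

lemma psi_AP (q : ℕ) [NeZero q] (r : ZMod q) (hr : IsUnit r) (ε : ℝ) (hε : 0 < ε) :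
    ∀ᶠ x : ℝ in atTop, ∑ n ∈ Finset.range (⌊x⌋₊ + 1),
      ArithmeticFunction.vonMangoldt.residueClass r n ≤ ((q.totient : ℝ)⁻¹ + ε) * x := by
  refine WI_upper (G := ArithmeticFunction.vonMangoldt.LFunctionResidueClassAux r)
    (ArithmeticFunction.vonMangoldt.residueClass_nonneg r)
    (ArithmeticFunction.vonMangoldt.residueClass_apply_zero r) ?_ (by positivity)
    (ArithmeticFunction.vonMangoldt.continuousOn_LFunctionResidueClassAux r) ?_ ε hε
  · intro σ hσ
    apply LSeriesSummable_of_abscissaOfAbsConv_lt_re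
    refine (ArithmeticFunction.vonMangoldt.abscissaOfAbsConv_residueClass_le_one r).trans_lt ?_
    simpa using (by exact_mod_cast hσ : (1 : EReal) < (σ : EReal))
  · intro s hs
    rw [ArithmeticFunction.vonMangoldt.eqOn_LFunctionResidueClassAux hr hs]
    simp

lemma prime_AP (q : ℕ) [NeZero q] (r : ZMod q) (hr : IsUnit r) (ε : ℝ) (hε : 0 < ε) :
    ∀ᶠ X : ℕ in atTop,
      (((Finset.range X).filter (fun p : ℕ => p.Prime ∧ (p : ZMod q) = r)).card : ℝ) ≤
        ((q.totient : ℝ)⁻¹ + ε) * (X / Real.log X) := by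
  obtain ⟨A, hA⟩ : ∃ A : ℝ, A = (q.totient : ℝ)⁻¹ := ⟨_, rfl⟩
  have hA0 : 0 ≤ A := by rw [hA]; positivity
  rw [← hA]
  obtain ⟨d, hd, hd1, hdA⟩ : ∃ d : ℝ, 0 < d ∧ d < 1 ∧ (A + d) / (1 - d) < A + ε / 2 := by
    have hc : ContinuousAt (fun e : ℝ => (A + e) / (1 - e)) 0 := by
      apply ContinuousAt.div (by fun_prop) (by fun_prop) (by norm_num)
    have h0 : (fun e : ℝ => (A + e) / (1 - e)) 0 < A + ε / 2 := by
      simp; linarith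
    have h2 : ∀ᶠ e : ℝ in 𝓝[>] 0, (A + e) / (1 - e) < A + ε / 2 :=
      (hc.eventually_lt_const h0).filter_mono nhdsWithin_le_nhds
    have h3 : ∀ᶠ e : ℝ in 𝓝[>] 0, e < 1 :=
      (eventually_lt_nhds (by norm_num : (0:ℝ) < 1)).filter_mono nhdsWithin_le_nhds
    obtain ⟨e, ⟨h4, h5⟩, h6⟩ := ((h2.and h3).and eventually_mem_nhdsWithin).exists
    exact ⟨e, h6, h5, h4⟩
  have hpsi := psi_AP q r hr d hd
  rw [← hA] at hpsi
  have hsmall : ∀ᶠ x : ℝ in atTop, (x ^ (1 - d) + 1) * Real.log x < ε / 2 * x := by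
    have h1 : Tendsto (fun x : ℝ => Real.log x / x ^ d) atTop (𝓝 0) :=
      (isLittleO_log_rpow_atTop hd).tendsto_div_nhds_zero
    have h2 : Tendsto (fun x : ℝ => Real.log x / x) atTop (𝓝 0) := by
      simpa using Real.isLittleO_log_id_atTop.tendsto_div_nhds_zero
    have h3 := h1.add h2
    rw [add_zero] at h3
    filter_upwards [h3.eventually_lt_const (half_pos hε), eventually_gt_atTop 0] with x hx hx0
    have h4 : (x ^ (1 - d) + 1) * Real.log x = (Real.log x / x ^ d + Real.log x / x) * x := by
      rw [Real.rpow_sub hx0, Real.rpow_one]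
      have : x ^ d ≠ 0 := (Real.rpow_pos_of_pos hx0 d).ne'
      field_simp
    rw [h4]
    exact mul_lt_mul_of_pos_right hx hx0
  have hall := (hpsi.and (hsmall.and (eventually_gt_atTop 1)))
  filter_upwards [tendsto_natCast_atTop_atTop.eventually hall] with X hX
  obtain ⟨h1, h2, h3⟩ := hX
  have hX0 : (0:ℝ) < X := by linarith
  have hL : 0 < Real.log X := Real.log_pos h3
  rw [Nat.floor_natCast] at h1
  obtain ⟨Z, hZ⟩ : ∃ Z : ℝ, Z = (X:ℝ) ^ (1 - d) := ⟨_, rfl⟩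
  rw [← hZ] at h2
  have hZ0 : 0 < Z := by rw [hZ]; positivity
  set P := (Finset.range X).filter (fun p : ℕ => p.Prime ∧ (p : ZMod q) = r) with hP
  have hcard : P.card = (P.filter (fun p : ℕ => (p:ℝ) ≤ Z)).card +
      (P.filter (fun p : ℕ => ¬ (p:ℝ) ≤ Z)).card :=
    (Finset.card_filter_add_card_filter_not _).symm
  have hc1 : ((P.filter (fun p : ℕ => (p:ℝ) ≤ Z)).card : ℝ) ≤ Z + 1 := by
    have : P.filter (fun p : ℕ => (p:ℝ) ≤ Z) ⊆ Finset.range (⌊Z⌋₊ + 1) := by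
      intro p hp
      rw [Finset.mem_filter] at hp
      rw [Finset.mem_range, Nat.lt_succ_iff]
      exact Nat.le_floor hp.2
    have h4 := Finset.card_le_card this
    rw [Finset.card_range] at h4
    have h5 : ((P.filter (fun p : ℕ => (p:ℝ) ≤ Z)).card : ℝ) ≤ (⌊Z⌋₊ : ℝ) + 1 := by exact_mod_cast h4
    linarith [Nat.floor_le hZ0.le]
  have hc2 : ((P.filter (fun p : ℕ => ¬ (p:ℝ) ≤ Z)).card : ℝ) * ((1 - d) * Real.log X) ≤
      (A + d) * X := by
    refine le_trans ?_ h1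
    calc ((P.filter (fun p : ℕ => ¬ (p:ℝ) ≤ Z)).card : ℝ) * ((1 - d) * Real.log X)
        = ∑ p ∈ P.filter (fun p : ℕ => ¬ (p:ℝ) ≤ Z), ((1 - d) * Real.log X) := by
          rw [Finset.sum_const, nsmul_eq_mul]
      _ ≤ ∑ p ∈ P.filter (fun p : ℕ => ¬ (p:ℝ) ≤ Z),
            ArithmeticFunction.vonMangoldt.residueClass r p := by
          apply Finset.sum_le_sum
          intro p hp
          rw [Finset.mem_filter, hP, Finset.mem_filter] at hp
          obtain ⟨⟨_, hpp, hpr⟩, hpz⟩ := hp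
          push Not at hpz
          rw [ArithmeticFunction.vonMangoldt.residueClass, Set.indicator_of_mem (by exact hpr),
            ArithmeticFunction.vonMangoldt_apply_prime hpp, ← Real.log_rpow hX0, ← hZ]
          exact Real.log_le_log hZ0 hpz.le
      _ ≤ _ := by
          apply Finset.sum_le_sum_of_subset_of_nonneg
          · intro p hp
            rw [Finset.mem_filter, hP, Finset.mem_filter, Finset.mem_range] at hp
            rw [Finset.mem_range]; omega
          · intro p _ _
            exact ArithmeticFunction.vonMangoldt.residueClass_nonneg r p
  rw [div_lt_iff₀ (by linarith)] at hdA
  have hc3 : ((P.filter (fun p : ℕ => ¬ (p:ℝ) ≤ Z)).card : ℝ) * Real.log X ≤ (A + ε / 2) * X := by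
    have h6 : (0:ℝ) < 1 - d := by linarith
    refine le_of_mul_le_mul_right ?_ h6
    nlinarith
  rw [← mul_div_assoc, le_div_iff₀ hL, hcard]
  push_cast
  nlinarith

lemma sum_coprime (a : ℕ) (ha : 3 ≤ a) :
    2 * ∑ v ∈ (Finset.range a).filter a.Coprime, v = a * a.totient := by
  have h1 : ∑ v ∈ (Finset.range a).filter a.Coprime, v =
      ∑ v ∈ (Finset.range a).filter a.Coprime, (a - v) := by
    have hmem : ∀ v ∈ (Finset.range a).filter a.Coprime, a - v ∈ (Finset.range a).filter a.Coprime := by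
      intro v hv
      rw [Finset.mem_filter, Finset.mem_range] at hv ⊢
      have hv0 : v ≠ 0 := by
        rintro rfl
        have := hv.2
        simp at this; omega
      refine ⟨by omega, ?_⟩
      exact (Nat.coprime_self_sub_right hv.1.le).mpr hv.2
    refine Finset.sum_nbij' (fun v => a - v) (fun v => a - v) hmem hmem ?_ ?_ ?_
    all_goals
      intro v hv
      rw [Finset.mem_filter, Finset.mem_range] at hv
      try dsimp only
      omega
  rw [two_mul]
  nth_rewrite 2 [h1]
  rw [← Finset.sum_add_distrib, Finset.sum_congr rfl (g := fun _ => a), Finset.sum_const,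
    smul_eq_mul, mul_comm, Nat.totient]
  intro v hv
  rw [Finset.mem_filter, Finset.mem_range] at hv
  omega

lemma piStar_le (a b : ℕ) (ha : 3 ≤ a) (hab : Nat.Coprime a b) :
    piStar a b ≤ (a + 1) + ∑ v ∈ (Finset.range a).filter a.Coprime,
      ((Finset.range (b * v)).filter
        (fun p : ℕ => p.Prime ∧ (p : ZMod a) = ((b * v : ℕ) : ZMod a))).card := by
  have : NeZero a := ⟨by omega⟩
  set U : Finset ℕ := Finset.range (a + 1) ∪ ((Finset.range a).filter a.Coprime).biUnion
    (fun v => (Finset.range (b * v)).filter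
        (fun p : ℕ => p.Prime ∧ (p : ZMod a) = ((b * v : ℕ) : ZMod a))) with hU
  have hsub : {p : ℕ | p.Prime ∧ ¬ ∃ u v : ℕ, p = a * u + b * v} ⊆ (U : Set ℕ) := by
    rintro p ⟨hp, hrep⟩
    rw [Finset.mem_coe, hU, Finset.mem_union]
    by_cases hpa : p ∣ a
    · left
      rw [Finset.mem_range]
      have := Nat.le_of_dvd (by omega) hpa
      omega
    · right
      have hcop : p.Coprime a := (Nat.Prime.coprime_iff_not_dvd hp).mpr hpa
      have hbu : IsUnit (b : ZMod a) := (ZMod.isUnit_iff_coprime b a).mpr hab.symm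
      have hpu : IsUnit (p : ZMod a) := (ZMod.isUnit_iff_coprime p a).mpr hcop
      obtain ⟨v, hv⟩ : ∃ v : ℕ, v = ((b : ZMod a)⁻¹ * (p : ZMod a)).val := ⟨_, rfl⟩
      have hva : v < a := hv ▸ ZMod.val_lt _
      have hbv : ((b * v : ℕ) : ZMod a) = p := by
        rw [hv]; push_cast
        rw [ZMod.natCast_zmod_val, ← mul_assoc, ZMod.mul_inv_of_unit _ hbu, one_mul]
      have hvc : a.Coprime v := by
        have h1 : IsUnit ((b * v : ℕ) : ZMod a) := hbv ▸ hpu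
        have h2 := (ZMod.isUnit_iff_coprime _ _).mp h1
        exact (Nat.Coprime.coprime_mul_left h2).symm
      rw [Finset.mem_biUnion]
      refine ⟨v, Finset.mem_filter.mpr ⟨Finset.mem_range.mpr hva, hvc⟩, ?_⟩
      rw [Finset.mem_filter, Finset.mem_range]
      refine ⟨?_, hp, hbv.symm⟩
      by_contra hlt
      push Not at hlt
      apply hrep
      have h3 := (ZMod.natCast_eq_natCast_iff _ _ _).mp hbv
      obtain ⟨u, hu⟩ := (Nat.modEq_iff_dvd' hlt).mp h3
      exact ⟨u, v, by omega⟩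
  unfold piStar
  refine (Set.ncard_le_ncard hsub (Finset.finite_toSet U)).trans ?_
  rw [Set.ncard_coe_finset]
  refine (Finset.card_union_le _ _).trans ?_
  rw [Finset.card_range]
  exact Nat.add_le_add_left Finset.card_biUnion_le _

/-- The factor `1/2 + 1/(2(a-1))` in the lower bound for `piStar a b` is best
possible: for every `ε > 0`, for all sufficiently large `b` coprime to `a`,
`piStar a b ≤ (1/2 + 1/(2(a-1)) + ε) · S(a,b)/log S(a,b)`. -/
theorem factor_is_best_possible :
    ∀ a : ℕ, 3 ≤ a → ∀ ε : ℝ, 0 < ε → ∃ B : ℕ, ∀ b : ℕ, B ≤ b →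
      Nat.Coprime a b →
      (piStar a b : ℝ) ≤
        ((1 : ℝ) / 2 + 1 / (2 * ((a : ℝ) - 1)) + ε) * (S a b : ℝ) /
          Real.log (S a b) := by
  intro a ha ε hε
  have : NeZero a := ⟨by omega⟩
  have haR : (3:ℝ) ≤ a := by exact_mod_cast ha
  have hφ : (0:ℝ) < a.totient := by exact_mod_cast Nat.totient_pos.mpr (by omega)
  have hφa : (a.totient:ℝ) ≤ a := by exact_mod_cast Nat.totient_le a
  have hall : ∀ᶠ X : ℕ in atTop, ∀ r : ZMod a, IsUnit r →
      (((Finset.range X).filter (fun p : ℕ => p.Prime ∧ (p : ZMod a) = r)).card : ℝ) ≤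
        ((a.totient : ℝ)⁻¹ + ε / a) * (X / Real.log X) := by
    rw [eventually_all]
    intro r
    by_cases hr : IsUnit r
    · filter_upwards [prime_AP a r hr (ε / a) (by positivity)] with X hX _ using hX
    · exact Eventually.of_forall fun X h => absurd h hr
  obtain ⟨l, hl⟩ : ∃ l : ℝ, l = Real.log a := ⟨_, rfl⟩
  obtain ⟨c, hc⟩ : ∃ c : ℝ, c = (1 : ℝ) / 2 + 1 / (2 * ((a : ℝ) - 1)) + ε := ⟨_, rfl⟩
  have hcP : c * (a - 1) = a / 2 + ε * (a - 1) := by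
    have : (a:ℝ) - 1 ≠ 0 := by linarith
    rw [hc]; field_simp; ring
  have hc0 : 0 < c := by
    have : (0:ℝ) < a - 1 := by linarith
    rw [hc]; positivity
  have hlim : ∀ᶠ b : ℝ in atTop, (a + 1) * ((Real.log b + l) / b) +
      (1 / 2 + ε / 2) * a * (1 + l / Real.log b) + c * a / b < a / 2 + ε * (a - 1) := by
    have h2 : Tendsto (fun x : ℝ => Real.log x / x) atTop (𝓝 0) := by
      simpa using Real.isLittleO_log_id_atTop.tendsto_div_nhds_zero
    have h3 : Tendsto (fun x : ℝ => l / x) atTop (𝓝 0) := tendsto_const_nhds.div_atTop tendsto_id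
    have h4 : Tendsto (fun x : ℝ => c * a / x) atTop (𝓝 0) := tendsto_const_nhds.div_atTop tendsto_id
    have h5 : Tendsto (fun x : ℝ => l / Real.log x) atTop (𝓝 0) :=
      tendsto_const_nhds.div_atTop Real.tendsto_log_atTop
    have h6 := (((h2.add h3).const_mul ((a:ℝ) + 1)).add
      ((h5.const_add 1).const_mul ((1 / 2 + ε / 2) * (a:ℝ)))).add h4
    simp only [← add_div (Real.log _) l] at h6
    apply h6.eventually_lt_const
    nlinarith
  obtain ⟨B1, hB1⟩ := eventually_atTop.mp hall
  obtain ⟨B2, hB2⟩ := eventually_atTop.mp (tendsto_natCast_atTop_atTop.eventually hlim)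
  refine ⟨max (max B1 B2) 3, fun b hb hab => ?_⟩
  have hb1 : B1 ≤ b := by omega
  have hb2 : B2 ≤ b := by omega
  have hb3 : 3 ≤ b := by omega
  have hbR : (3:ℝ) ≤ b := by exact_mod_cast hb3
  have hL : 0 < Real.log b := Real.log_pos (by linarith)
  have hlim2 := hB2 b hb2
  have hl0 : 0 ≤ l := by rw [hl]; exact Real.log_nonneg (by linarith)
  have hcount : (piStar a b : ℝ) ≤ (a + 1) + (1 / 2 + ε / 2) * a * (b / Real.log b) := by
    have h1 : (piStar a b : ℝ) ≤ ((a + 1) + ∑ v ∈ (Finset.range a).filter a.Coprime,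
      ((Finset.range (b * v)).filter
        (fun p : ℕ => p.Prime ∧ (p : ZMod a) = ((b * v : ℕ) : ZMod a))).card : ℕ) := by
      exact_mod_cast piStar_le a b ha hab
    refine h1.trans ?_
    push_cast
    have h2 : ∀ v ∈ (Finset.range a).filter a.Coprime, (((Finset.range (b * v)).filter
        (fun p : ℕ => p.Prime ∧ (p : ZMod a) = (b:ZMod a) * (v : ZMod a))).card : ℝ) ≤
        ((a.totient : ℝ)⁻¹ + ε / a) * (b / Real.log b) * v := by
      intro v hv
      rw [Finset.mem_filter, Finset.mem_range] at hv
      have hv0 : 1 ≤ v := by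
        rcases Nat.eq_zero_or_pos v with rfl | h
        · have := hv.2
          simp at this; omega
        · exact h
      have hbv : b ≤ b * v := Nat.le_mul_of_pos_right b hv0
      have hu : IsUnit ((b * v : ℕ) : ZMod a) :=
        (ZMod.isUnit_iff_coprime _ _).mpr (Nat.Coprime.mul_right hab hv.2).symm
      have h3 := hB1 (b * v) (by omega) _ hu
      push_cast at h3
      refine h3.trans ?_
      rw [mul_assoc]
      apply mul_le_mul_of_nonneg_left _ (by positivity)
      rw [div_mul_eq_mul_div]
      apply div_le_div_of_nonneg_left (by positivity) hL
      apply Real.log_le_log (by linarith)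
      exact_mod_cast hbv
    have h4 := Finset.sum_le_sum h2
    rw [← Finset.mul_sum] at h4
    have h5 : (2:ℝ) * ∑ v ∈ (Finset.range a).filter a.Coprime, (v:ℝ) = a * a.totient := by
      have := congrArg (Nat.cast : ℕ → ℝ) (sum_coprime a ha)
      push_cast at this
      exact this
    have h6 : ((a.totient : ℝ)⁻¹ + ε / a) * (b / Real.log b) *
        ∑ v ∈ (Finset.range a).filter a.Coprime, (v:ℝ) ≤
        (1 / 2 + ε / 2) * a * (b / Real.log b) := by
      have h7 : ∑ v ∈ (Finset.range a).filter a.Coprime, (v:ℝ) = a * a.totient / 2 := by linarith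
      rw [h7]
      have h8 : ((a.totient : ℝ)⁻¹ + ε / a) * (b / Real.log b) * (a * a.totient / 2) =
          (a / 2 + ε / 2 * a.totient) * (b / Real.log b) := by
        field_simp
      rw [h8]
      apply mul_le_mul_of_nonneg_right _ (by positivity)
      nlinarith
    linarith
  have hSle : a + b + 1 < a * b := by nlinarith
  have hS : (S a b : ℝ) = (a - 1) * b - a := by
    unfold S
    rw [Nat.cast_sub (by omega), Nat.cast_sub (by omega)]
    push_cast; ring
  have hS1 : (1:ℝ) < S a b := by
    have : 1 < S a b := by unfold S; omega
    exact_mod_cast this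
  have hlogS : Real.log (S a b) ≤ Real.log b + l := by
    rw [hl, ← Real.log_mul (by linarith) (by linarith)]
    apply Real.log_le_log (by linarith)
    rw [hS]; nlinarith
  have hlogS0 : 0 < Real.log (S a b) := Real.log_pos hS1
  rw [← hc, le_div_iff₀ hlogS0]
  have hb0 : (0:ℝ) < b := by linarith
  calc (piStar a b : ℝ) * Real.log (S a b)
      ≤ ((a + 1) + (1 / 2 + ε / 2) * a * (b / Real.log b)) * (Real.log b + l) := by
        apply mul_le_mul hcount hlogS hlogS0.le
        positivity
    _ = ((a + 1) * ((Real.log b + l) / b) +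
      (1 / 2 + ε / 2) * a * (1 + l / Real.log b)) * b := by
        field_simp
    _ ≤ (a / 2 + ε * (a - 1) - c * a / b) * b := by
        apply mul_le_mul_of_nonneg_right _ hb0.le
        linarith
    _ = c * S a b := by
        rw [hS, ← hcP]; field_simp
end
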